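/- Let L > 0 and T > 0. There exist η > 0 and C > 0 such that for every ε ∈ (0,1], every initial datum y₀ with ‖y₀‖_{L²(0,L)} ≤ η, and every classical solution y of the modified KdV system (with cutoff Φ_ε) on [0,T] with y(0,·) = y₀, one has ‖y(t,·)‖_{H₀¹(0,L)} ≤ (C/√t) ‖y₀‖_{L²(0,L)} for all t ∈ (0,T]. -/

import Mathlib

open Set Real MeasureTheory

/-- The `L²(0,L)` norm of a function on `(0,L)`. -/
noncomputable def L2norm (L : ℝ) (f : ℝ → ℝ) : ℝ :=
  Real.sqrt (∫ x in (0:ℝ)..L, (f x) ^ 2)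

/-- A smooth cutoff `Φ ∈ C^∞([0,∞);[0,1])` with `Φ ≡ 1` on `[0,1/2]`, `Φ ≡ 0` on
`[1,∞)` and `Φ′ ≤ 0`.  (The rescaled cutoff is `Φ_ε(r) = Φ(r/ε)`.) -/
def IsCutoff (Φ : ℝ → ℝ) : Prop :=
  ContDiff ℝ (⊤ : ℕ∞) Φ ∧
  (∀ r ∈ Ici (0:ℝ), Φ r ∈ Icc (0:ℝ) 1) ∧
  (∀ r ∈ Icc (0:ℝ) (1/2 : ℝ), Φ r = 1) ∧
  (∀ r ∈ Ici (1:ℝ), Φ r = 0) ∧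
  (∀ r ∈ Ici (0:ℝ), deriv Φ r ≤ 0)

/-- A classical solution of the modified KdV system (with cutoff `Φ_ε = Φ(·/ε)`)
`y_t + y_x + y_xxx + Φ_ε(‖y(t,·)‖_{L²(0,L)}) y y_x = 0`,
`y(t,0) = y(t,L) = y_x(t,L) = 0`, on `[0,T] × [0,L]`. -/
def IsModifiedKdVSol (L T ε : ℝ) (Φ : ℝ → ℝ) (y : ℝ → ℝ → ℝ) : Prop :=
  (∀ t ∈ Icc (0:ℝ) T, ContDiffOn ℝ 3 (y t) (Icc (0:ℝ) L)) ∧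
  (∀ x ∈ Icc (0:ℝ) L, ContDiffOn ℝ 1 (fun s => y s x) (Icc (0:ℝ) T)) ∧
  ContinuousOn (fun p : ℝ × ℝ => y p.1 p.2) (Icc (0:ℝ) T ×ˢ Icc (0:ℝ) L) ∧
  (∀ t ∈ Ioo (0:ℝ) T, ∀ x ∈ Ioo (0:ℝ) L,
    derivWithin (fun s => y s x) (Icc (0:ℝ) T) t
      + derivWithin (y t) (Icc (0:ℝ) L) x
      + iteratedDerivWithin 3 (y t) (Icc (0:ℝ) L) x
      + Φ (L2norm L (y t) / ε) * (y t x * derivWithin (y t) (Icc (0:ℝ) L) x) = 0) ∧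
  (∀ t ∈ Icc (0:ℝ) T,
    y t 0 = 0 ∧ y t L = 0 ∧ derivWithin (y t) (Icc (0:ℝ) L) L = 0)

/-- The `H¹(0,L)` (hence `H₀¹(0,L)`) norm of a function on `(0,L)`, the derivative
being taken within `[0,L]`. -/
noncomputable def H1norm (L : ℝ) (f : ℝ → ℝ) : ℝ :=
  Real.sqrt (∫ x in (0:ℝ)..L, ((f x) ^ 2 + (derivWithin f (Icc (0:ℝ) L) x) ^ 2))


/-! ### Spatial lemmas -/

/-- `f` is three times continuously differentiable on `[0,L]` and satisfies the KdV
boundary conditions. -/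
structure C3 (L : ℝ) (f f1 f2 f3 : ℝ → ℝ) : Prop where
  c0 : ContinuousOn f (Icc 0 L)
  c1 : ContinuousOn f1 (Icc 0 L)
  c2 : ContinuousOn f2 (Icc 0 L)
  c3 : ContinuousOn f3 (Icc 0 L)
  d0 : ∀ x ∈ Ioo 0 L, HasDerivAt f (f1 x) x
  d1 : ∀ x ∈ Ioo 0 L, HasDerivAt f1 (f2 x) x
  d2 : ∀ x ∈ Ioo 0 L, HasDerivAt f2 (f3 x) x
  b0 : f 0 = 0
  bL : f L = 0
  b1 : f1 L = 0

lemma C3.sub {L : ℝ} {f f1 f2 f3 g g1 g2 g3 : ℝ → ℝ} (hf : C3 L f f1 f2 f3)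
    (hg : C3 L g g1 g2 g3) :
    C3 L (fun x => f x - g x) (fun x => f1 x - g1 x) (fun x => f2 x - g2 x)
      (fun x => f3 x - g3 x) where
  c0 := hf.c0.sub hg.c0
  c1 := hf.c1.sub hg.c1
  c2 := hf.c2.sub hg.c2
  c3 := hf.c3.sub hg.c3
  d0 := fun x hx => (hf.d0 x hx).sub (hg.d0 x hx)
  d1 := fun x hx => (hf.d1 x hx).sub (hg.d1 x hx)
  d2 := fun x hx => (hf.d2 x hx).sub (hg.d2 x hx)
  b0 := by simp [hf.b0, hg.b0]
  bL := by simp [hf.bL, hg.bL]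
  b1 := by simp [hf.b1, hg.b1]

lemma ftc0 {a b : ℝ} (hab : a ≤ b) {F F' : ℝ → ℝ} (hF : ContinuousOn F (Icc a b))
    (hd : ∀ x ∈ Ioo a b, HasDerivAt F (F' x) x) (hF' : ContinuousOn F' (Icc a b)) :
    ∫ x in a..b, F' x = F b - F a :=
  intervalIntegral.integral_eq_sub_of_hasDerivAt_of_le hab hF hd
    (hF'.intervalIntegrable_of_Icc hab)

lemma L2_nonneg (L : ℝ) (f : ℝ → ℝ) : 0 ≤ L2norm L f := Real.sqrt_nonneg _

lemma L2_sq {L : ℝ} (hL : 0 ≤ L) (f : ℝ → ℝ) :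
    L2norm L f ^ 2 = ∫ x in (0:ℝ)..L, (f x) ^ 2 :=
  Real.sq_sqrt (intervalIntegral.integral_nonneg hL (fun x _ => sq_nonneg _))

lemma L2_congr {L : ℝ} (hL : 0 ≤ L) {f g : ℝ → ℝ} (h : ∀ x ∈ Ioo 0 L, f x = g x) :
    L2norm L f = L2norm L g := by
  unfold L2norm
  congr 1
  rw [intervalIntegral.integral_of_le hL, intervalIntegral.integral_of_le hL,
    integral_Ioc_eq_integral_Ioo, integral_Ioc_eq_integral_Ioo]
  apply setIntegral_congr_fun measurableSet_Ioo
  intro x hx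
  simp [h x hx]

lemma cs {L : ℝ} (hL : 0 ≤ L) {f g : ℝ → ℝ} (hf : ContinuousOn f (Icc 0 L))
    (hg : ContinuousOn g (Icc 0 L)) :
    |∫ x in (0:ℝ)..L, f x * g x| ≤ L2norm L f * L2norm L g := by
  have hff : IntervalIntegrable (fun x => f x ^ 2) volume 0 L :=
    (hf.pow 2).intervalIntegrable_of_Icc hL
  have hgg : IntervalIntegrable (fun x => g x ^ 2) volume 0 L :=
    (hg.pow 2).intervalIntegrable_of_Icc hL
  have hfg : IntervalIntegrable (fun x => f x * g x) volume 0 L :=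
    (hf.mul hg).intervalIntegrable_of_Icc hL
  have key : ∀ l : ℝ, 0 ≤ L2norm L g ^ 2 * (l * l) + 2 * (∫ x in (0:ℝ)..L, f x * g x) * l
      + L2norm L f ^ 2 := by
    intro l
    have : 0 ≤ ∫ x in (0:ℝ)..L, (f x + l * g x) ^ 2 :=
      intervalIntegral.integral_nonneg hL (fun x _ => sq_nonneg _)
    have e : ∫ x in (0:ℝ)..L, (f x + l * g x) ^ 2 =
        L2norm L f ^ 2 + 2 * l * (∫ x in (0:ℝ)..L, f x * g x) + l ^ 2 * L2norm L g ^ 2 := by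
      rw [L2_sq hL, L2_sq hL, ← intervalIntegral.integral_const_mul,
        ← intervalIntegral.integral_const_mul,
        ← intervalIntegral.integral_add hff (hfg.const_mul _),
        ← intervalIntegral.integral_add (hff.add (hfg.const_mul _)) (hgg.const_mul _)]
      congr 1
      ext x
      ring
    nlinarith
  have := discrim_le_zero key
  unfold discrim at this
  apply abs_le_of_sq_le_sq _ (mul_nonneg (L2_nonneg _ _) (L2_nonneg _ _))
  nlinarith

lemma L2_add {L : ℝ} (hL : 0 ≤ L) {f g : ℝ → ℝ} (hf : ContinuousOn f (Icc 0 L))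
    (hg : ContinuousOn g (Icc 0 L)) :
    L2norm L (fun x => f x + g x) ≤ L2norm L f + L2norm L g := by
  have hff : IntervalIntegrable (fun x => f x ^ 2) volume 0 L :=
    (hf.pow 2).intervalIntegrable_of_Icc hL
  have hgg : IntervalIntegrable (fun x => g x ^ 2) volume 0 L :=
    (hg.pow 2).intervalIntegrable_of_Icc hL
  have hfg : IntervalIntegrable (fun x => f x * g x) volume 0 L :=
    (hf.mul hg).intervalIntegrable_of_Icc hL
  apply abs_le_of_sq_le_sq' _ (add_nonneg (L2_nonneg _ _) (L2_nonneg _ _)) |>.2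
  have e : L2norm L (fun x => f x + g x) ^ 2 =
        L2norm L f ^ 2 + 2 * (∫ x in (0:ℝ)..L, f x * g x) + L2norm L g ^ 2 := by
    rw [L2_sq hL, L2_sq hL, L2_sq hL, ← intervalIntegral.integral_const_mul,
        ← intervalIntegral.integral_add hff (hfg.const_mul _),
        ← intervalIntegral.integral_add (hff.add (hfg.const_mul _)) hgg]
    congr 1
    ext x
    ring
  have := (abs_le.1 (cs hL hf hg)).2
  nlinarith

lemma L2_neg {L : ℝ} (f : ℝ → ℝ) : L2norm L (fun x => - f x) = L2norm L f := by
  simp [L2norm]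

lemma L2_abs {L : ℝ} (f : ℝ → ℝ) : L2norm L (fun x => |f x|) = L2norm L f := by
  simp [L2norm]

lemma L2_sub {L : ℝ} (hL : 0 ≤ L) {f g : ℝ → ℝ} (hf : ContinuousOn f (Icc 0 L))
    (hg : ContinuousOn g (Icc 0 L)) :
    L2norm L (fun x => f x - g x) ≤ L2norm L f + L2norm L g := by
  have := L2_add hL hf (g := fun x => - g x) hg.neg
  rw [L2_neg] at this
  simpa only [sub_eq_add_neg] using this

lemma L2_abs_sub {L : ℝ} (hL : 0 ≤ L) {f g : ℝ → ℝ} (hf : ContinuousOn f (Icc 0 L))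
    (hg : ContinuousOn g (Icc 0 L)) :
    |L2norm L f - L2norm L g| ≤ L2norm L (fun x => f x - g x) := by
  have h1 : L2norm L f ≤ L2norm L (fun x => f x - g x) + L2norm L g := by
    simpa using L2_add hL (f := fun x => f x - g x) (hf.sub hg) hg
  have h2 : L2norm L g ≤ L2norm L f + L2norm L (fun x => f x - g x) := by
    simpa using L2_sub hL hf (g := fun x => f x - g x) (hf.sub hg)
  rw [abs_le]
  constructor
  · linarith
  · linarith

lemma L2_mono {L : ℝ} (hL : 0 ≤ L) {f g : ℝ → ℝ} (hf : ContinuousOn f (Icc 0 L))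
    (hg : ContinuousOn g (Icc 0 L)) (h : ∀ x ∈ Icc 0 L, |f x| ≤ |g x|) :
    L2norm L f ≤ L2norm L g := by
  apply Real.sqrt_le_sqrt
  apply intervalIntegral.integral_mono_on hL ((hf.pow 2).intervalIntegrable_of_Icc hL)
    ((hg.pow 2).intervalIntegrable_of_Icc hL)
  intro x hx
  exact sq_le_sq.2 (h x hx)

lemma L2_const_mul {L : ℝ} (c : ℝ) (f : ℝ → ℝ) :
    L2norm L (fun x => c * f x) = |c| * L2norm L f := by
  unfold L2norm
  simp only [mul_pow]
  rw [intervalIntegral.integral_const_mul, Real.sqrt_mul (sq_nonneg c), Real.sqrt_sq_eq_abs]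

lemma L2_const {L : ℝ} (hL : 0 ≤ L) (c : ℝ) : L2norm L (fun _ => c) = |c| * Real.sqrt L := by
  unfold L2norm
  simp only [intervalIntegral.integral_const, smul_eq_mul, sub_zero]
  rw [mul_comm, Real.sqrt_mul (sq_nonneg c), Real.sqrt_sq_eq_abs]

section GN

variable {L : ℝ} {f f1 f2 f3 : ℝ → ℝ}

lemma gn1 (hL : 0 < L) (h : C3 L f f1 f2 f3) :
    L2norm L f1 ^ 2 ≤ L2norm L f * L2norm L f2 := by
  have i1 : IntervalIntegrable (fun x => f1 x ^ 2) volume 0 L :=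
    (h.c1.pow 2).intervalIntegrable_of_Icc hL.le
  have i2 : IntervalIntegrable (fun x => f x * f2 x) volume 0 L :=
    (h.c0.mul h.c2).intervalIntegrable_of_Icc hL.le
  have := ftc0 (F := fun x => f x * f1 x) hL.le (h.c0.mul h.c1) (F' := fun x => f1 x ^ 2 + f x * f2 x)
    (fun x hx => by
      exact ((h.d0 x hx).fun_mul (h.d1 x hx)).congr_deriv (by ring)) ((h.c1.pow 2).add (h.c0.mul h.c2))
  rw [intervalIntegral.integral_add i1 i2, ← L2_sq hL.le] at this
  simp only [h.b0, h.bL] at this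
  have h2 := (abs_le.1 (cs hL.le h.c0 h.c2)).1
  linarith

lemma sup_sq (hL : 0 < L) (h : C3 L f f1 f2 f3) {x : ℝ} (hx : x ∈ Icc 0 L) :
    f x ^ 2 ≤ 2 * L2norm L f * L2norm L f1 := by
  have hsub : Icc 0 x ⊆ Icc 0 L := Icc_subset_Icc_right hx.2
  have hsub' : Ioo 0 x ⊆ Ioo 0 L := Ioo_subset_Ioo_right hx.2
  have e := ftc0 (F := fun x => f x ^ 2) hx.1 ((h.c0.pow 2).mono hsub) (F' := fun x => 2 * (f x * f1 x))
    (fun y hy => by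
      exact ((h.d0 y (hsub' hy)).fun_pow 2).congr_deriv (by norm_num; ring)) ((continuousOn_const.mul (h.c0.mul h.c1)).mono hsub)
  simp only [h.b0] at e
  have c := cs hL.le h.c0.abs h.c1.abs
  rw [L2_abs, L2_abs] at c
  have m : ∫ y in (0:ℝ)..x, 2 * (f y * f1 y) ≤ ∫ y in (0:ℝ)..L, 2 * (|f y| * |f1 y|) := by
    calc _ ≤ ∫ y in (0:ℝ)..x, 2 * (|f y| * |f1 y|) := by
          apply intervalIntegral.integral_mono_on hx.1
          · exact ((continuousOn_const.mul (h.c0.mul h.c1)).mono hsub).intervalIntegrable_of_Icc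
              hx.1
          · exact ((continuousOn_const.mul (h.c0.abs.mul h.c1.abs)).mono
              hsub).intervalIntegrable_of_Icc hx.1
          · intro y _
            rw [← abs_mul]
            linarith [le_abs_self (f y * f1 y)]
      _ ≤ _ := by
          apply intervalIntegral.integral_mono_interval le_rfl hx.1 hx.2
          · exact Filter.Eventually.of_forall (fun y => by positivity)
          · exact (continuousOn_const.mul (h.c0.abs.mul h.c1.abs)).intervalIntegrable_of_Icc hL.le
  simp only [intervalIntegral.integral_const_mul] at m e
  have := le_abs_self (∫ y in (0:ℝ)..L, (|f y| * |f1 y|))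
  linarith

lemma gn2 (hL : 0 < L) (h : C3 L f f1 f2 f3) :
    L2norm L f2 ^ 2 ≤ 6 * (L2norm L f1 * L2norm L f3) := by
  -- trace of `f1`
  have t1 : f1 0 ^ 2 ≤ 2 * L2norm L f1 * L2norm L f2 := by
    have e := ftc0 (F := fun x => f1 x ^ 2) hL.le (h.c1.pow 2) (F' := fun x => 2 * (f1 x * f2 x))
      (fun y hy => by
        exact ((h.d1 y hy).fun_pow 2).congr_deriv (by norm_num; ring)) ((continuousOn_const.mul (h.c1.mul h.c2)))
    simp only [h.b1] at e
    rw [intervalIntegral.integral_const_mul] at e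
    have := (abs_le.1 (cs hL.le h.c1 h.c2)).1
    linarith
  -- a zero of `f2`
  obtain ⟨ξ, hξ, hξ0⟩ := exists_hasDerivAt_eq_zero hL h.c0 (h.b0.trans h.bL.symm) h.d0
  obtain ⟨ζ, hζ, hζ0⟩ := exists_hasDerivAt_eq_zero hξ.2
    (h.c1.mono (Icc_subset_Icc_left hξ.1.le)) (hξ0.trans h.b1.symm)
    (fun x hx => h.d1 x ⟨hξ.1.trans hx.1, hx.2⟩)
  have hζL : ζ ∈ Ioo 0 L := ⟨hξ.1.trans hζ.1, hζ.2⟩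
  have t2 : f2 0 ^ 2 ≤ 2 * L2norm L f2 * L2norm L f3 := by
    have hsub : Icc 0 ζ ⊆ Icc 0 L := Icc_subset_Icc_right hζL.2.le
    have hsub' : Ioo 0 ζ ⊆ Ioo 0 L := Ioo_subset_Ioo_right hζL.2.le
    have e := ftc0 (F := fun x => f2 x ^ 2) hζL.1.le ((h.c2.pow 2).mono hsub) (F' := fun x => 2 * (f2 x * f3 x))
      (fun y hy => by
        exact ((h.d2 y (hsub' hy)).fun_pow 2).congr_deriv (by norm_num; ring)) ((continuousOn_const.mul (h.c2.mul h.c3)).mono hsub)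
    simp only [hζ0] at e
    have c := cs hL.le h.c2.abs h.c3.abs
    rw [L2_abs, L2_abs] at c
    have m : ∫ y in (0:ℝ)..ζ, -(2 * (f2 y * f3 y)) ≤ ∫ y in (0:ℝ)..L, 2 * (|f2 y| * |f3 y|) := by
      calc _ ≤ ∫ y in (0:ℝ)..ζ, 2 * (|f2 y| * |f3 y|) := by
            apply intervalIntegral.integral_mono_on hζL.1.le
            · exact ((continuousOn_const.mul (h.c2.mul h.c3)).mono
                hsub).neg.intervalIntegrable_of_Icc hζL.1.le
            · exact ((continuousOn_const.mul (h.c2.abs.mul h.c3.abs)).mono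
                hsub).intervalIntegrable_of_Icc hζL.1.le
            · intro y _
              rw [← abs_mul]
              linarith [neg_abs_le (f2 y * f3 y)]
        _ ≤ _ := by
            apply intervalIntegral.integral_mono_interval le_rfl hζL.1.le hζL.2.le
            · exact Filter.Eventually.of_forall (fun y => by positivity)
            · exact (continuousOn_const.mul
                (h.c2.abs.mul h.c3.abs)).intervalIntegrable_of_Icc hL.le
    rw [intervalIntegral.integral_neg, e, intervalIntegral.integral_const_mul] at m
    have := le_abs_self (∫ y in (0:ℝ)..L, (|f2 y| * |f3 y|))
    linarith
  have i1 : IntervalIntegrable (fun x => f2 x ^ 2) volume 0 L :=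
    (h.c2.pow 2).intervalIntegrable_of_Icc hL.le
  have i2 : IntervalIntegrable (fun x => f1 x * f3 x) volume 0 L :=
    (h.c1.mul h.c3).intervalIntegrable_of_Icc hL.le
  have := ftc0 (F := fun x => f1 x * f2 x) hL.le (h.c1.mul h.c2) (F' := fun x => f2 x ^ 2 + f1 x * f3 x)
    (fun x hx => by
      exact ((h.d1 x hx).fun_mul (h.d2 x hx)).congr_deriv (by ring)) ((h.c2.pow 2).add (h.c1.mul h.c3))
  rw [intervalIntegral.integral_add i1 i2, ← L2_sq hL.le] at this
  simp only [h.b1] at this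
  have h2 := (abs_le.1 (cs hL.le h.c1 h.c3)).1
  have a0 := L2_nonneg L f1
  have b0 := L2_nonneg L f2
  have c0 := L2_nonneg L f3
  set a := L2norm L f1
  set b := L2norm L f2
  set c := L2norm L f3
  have hg : Real.sqrt (a * c) ^ 2 = a * c := Real.sq_sqrt (by positivity)
  have g0 := Real.sqrt_nonneg (a * c)
  set g := Real.sqrt (a * c)
  have p : |f1 0 * f2 0| ≤ 2 * b * g := by
    apply abs_le_of_sq_le_sq _ (by positivity)
    calc (f1 0 * f2 0) ^ 2 = f1 0 ^ 2 * f2 0 ^ 2 := by ring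
      _ ≤ (2 * a * b) * (2 * b * c) := by gcongr
      _ = 4 * b ^ 2 * (a * c) := by ring
      _ = (2 * b * g) ^ 2 := by rw [← hg]; ring
  have p' := (abs_le.1 p).1
  nlinarith [sq_nonneg (b - 2 * g)]

end GN

/-! ### Derived spatial estimates -/

lemma C3.zero (L : ℝ) : C3 L (fun _ => 0) (fun _ => 0) (fun _ => 0) (fun _ => 0) where
  c0 := continuousOn_const
  c1 := continuousOn_const
  c2 := continuousOn_const
  c3 := continuousOn_const
  d0 := fun x _ => hasDerivAt_const x _
  d1 := fun x _ => hasDerivAt_const x _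
  d2 := fun x _ => hasDerivAt_const x _
  b0 := rfl
  bL := rfl
  b1 := rfl

lemma L2_zero (L : ℝ) : L2norm L (fun _ => (0:ℝ)) = 0 := by
  simp [L2norm]

/-- multiplication by a bounded function -/
lemma L2_mul_le {L : ℝ} (hL : 0 ≤ L) {f g : ℝ → ℝ} {B : ℝ} (hf : ContinuousOn f (Icc 0 L))
    (hg : ContinuousOn g (Icc 0 L)) (hB : 0 ≤ B) (h : ∀ x ∈ Icc 0 L, |f x| ≤ B) :
    L2norm L (fun x => f x * g x) ≤ B * L2norm L g := by
  have := L2_mono hL (f := fun x => f x * g x) (g := fun x => B * g x) (hf.mul hg)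
    (continuousOn_const.mul hg) (fun x hx => by
      rw [abs_mul, abs_mul, abs_of_nonneg hB]
      exact mul_le_mul_of_nonneg_right (h x hx) (abs_nonneg _))
  rwa [L2_const_mul, abs_of_nonneg hB] at this

section

variable {L : ℝ} {f f1 f2 f3 : ℝ → ℝ}

lemma gn_a3 (hL : 0 < L) (h : C3 L f f1 f2 f3) :
    L2norm L f1 ^ 3 ≤ 6 * L2norm L f3 * L2norm L f ^ 2 := by
  have g1 := gn1 hL h
  have g2 := gn2 hL h
  have e0 := L2_nonneg L f
  have a0 := L2_nonneg L f1
  have b0 := L2_nonneg L f2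
  have c0 := L2_nonneg L f3
  set e := L2norm L f
  set a := L2norm L f1
  set b := L2norm L f2
  set c := L2norm L f3
  rcases a0.eq_or_lt with ha | ha
  · rw [← ha, zero_pow (by norm_num)]; positivity
  · have : a * a ^ 3 ≤ a * (6 * c * e ^ 2) := by
      calc a * a ^ 3 = (a ^ 2) ^ 2 := by ring
        _ ≤ (e * b) ^ 2 := by gcongr
        _ = e ^ 2 * b ^ 2 := by ring
        _ ≤ e ^ 2 * (6 * (a * c)) := by gcongr
        _ = _ := by ring
    exact le_of_mul_le_mul_left this ha

lemma gn_b3 (hL : 0 < L) (h : C3 L f f1 f2 f3) :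
    L2norm L f2 ^ 3 ≤ 36 * L2norm L f3 ^ 2 * L2norm L f := by
  have g1 := gn_a3 hL h
  have g2 := gn2 hL h
  have e0 := L2_nonneg L f
  have a0 := L2_nonneg L f1
  have b0 := L2_nonneg L f2
  have c0 := L2_nonneg L f3
  set e := L2norm L f
  set a := L2norm L f1
  set b := L2norm L f2
  set c := L2norm L f3
  apply abs_le_of_sq_le_sq' _ (by positivity) |>.2
  calc (b ^ 3) ^ 2 = (b ^ 2) ^ 3 := by ring
    _ ≤ (6 * (a * c)) ^ 3 := by gcongr
    _ = 216 * c ^ 3 * a ^ 3 := by ring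
    _ ≤ 216 * c ^ 3 * (6 * c * e ^ 2) := by gcongr
    _ = _ := by ring

lemma L2_le_sup (hL : 0 < L) (hf : ContinuousOn f (Icc 0 L)) {M : ℝ} (hM : 0 ≤ M)
    (h : ∀ x ∈ Icc 0 L, f x ^ 2 ≤ M) : L2norm L f ^ 2 ≤ L * M := by
  rw [L2_sq hL.le]
  calc _ ≤ ∫ x in (0:ℝ)..L, M := by
        apply intervalIntegral.integral_mono_on hL.le
          ((hf.pow 2).intervalIntegrable_of_Icc hL.le) (by simp) h
    _ = _ := by simp

/-- Poincaré type inequality. -/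
lemma poinc (hL : 0 < L) (h : C3 L f f1 f2 f3) :
    L2norm L f ≤ 2 * L * L2norm L f1 := by
  have e0 := L2_nonneg L f
  have a0 := L2_nonneg L f1
  have := L2_le_sup hL h.c0 (M := 2 * L2norm L f * L2norm L f1) (by positivity)
    (fun x hx => sup_sq hL h hx)
  rcases e0.eq_or_lt with he | he
  · rw [← he]; positivity
  · nlinarith

lemma sup_sq' (hL : 0 < L) (h : C3 L f f1 f2 f3) {x : ℝ} (hx : x ∈ Icc 0 L) :
    f x ^ 2 ≤ 4 * L * L2norm L f1 ^ 2 := by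
  have := sup_sq hL h hx
  have p := poinc hL h
  have a0 := L2_nonneg L f1
  nlinarith

lemma L2_ff1 (hL : 0 < L) (h : C3 L f f1 f2 f3) {g : ℝ → ℝ} (hg : ContinuousOn g (Icc 0 L)) :
    L2norm L (fun x => f x * g x) ^ 2 ≤ 2 * L2norm L f * L2norm L f1 * L2norm L g ^ 2 := by
  have e0 := L2_nonneg L f
  have a0 := L2_nonneg L f1
  have := L2_mul_le hL.le h.c0 hg (Real.sqrt_nonneg (2 * L2norm L f * L2norm L f1))
    (fun x hx => by
      apply Real.abs_le_sqrt
      exact sup_sq hL h hx)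
  have h2 := pow_le_pow_left₀ (L2_nonneg _ _) this 2
  rwa [mul_pow, Real.sq_sqrt (by positivity)] at h2

lemma lemC (hL : 0 < L) (h : C3 L f f1 f2 f3) {φ Λ : ℝ} (hφ0 : 0 ≤ φ) (hφ1 : φ ≤ 1)
    (hg : L2norm L (fun x => f1 x + f3 x + φ * (f x * f1 x)) ≤ Λ) :
    L2norm L f3 ≤ 2 * Λ + 10 * L2norm L f + 48 * L2norm L f ^ 3 := by
  have k1 : L2norm L f3 ≤ L2norm L (fun x => f1 x + f3 x + φ * (f x * f1 x)) +
      (L2norm L f1 + L2norm L (fun x => f x * f1 x)) := by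
    have cff : ContinuousOn (fun x => φ * (f x * f1 x)) (Icc 0 L) :=
      continuousOn_const.mul (h.c0.mul h.c1)
    have s1 := L2_sub hL.le (f := fun x => f1 x + f3 x + φ * (f x * f1 x))
      (g := fun x => f1 x + φ * (f x * f1 x)) ((h.c1.add h.c3).add cff) (h.c1.add cff)
    have s2 := L2_add hL.le h.c1 cff
    rw [L2_const_mul, abs_of_nonneg hφ0] at s2
    have s3 : L2norm L f3 = L2norm L (fun x => f1 x + f3 x + φ * (f x * f1 x) -
        (f1 x + φ * (f x * f1 x))) := L2_congr hL.le (fun x _ => by ring)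
    have s4 := mul_le_mul_of_nonneg_right hφ1 (L2_nonneg L (fun x => f x * f1 x))
    linarith
  have k2 := L2_ff1 hL h h.c1
  have k3 := gn_a3 hL h
  have e0 := L2_nonneg L f
  have a0 := L2_nonneg L f1
  have c0 := L2_nonneg L f3
  set e := L2norm L f
  set a := L2norm L f1
  set c := L2norm L f3
  set q := L2norm L (fun x => f x * f1 x)
  have k4 : a ≤ c / 4 + 5 * e := by
    by_contra hc
    push Not at hc
    have : (c / 4 + 5 * e) ^ 3 < a ^ 3 := by gcongr
    have p1 : 0 ≤ c ^ 3 := by positivity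
    have p2 : 0 ≤ c ^ 2 * e := by positivity
    have p3 : 0 ≤ c * e ^ 2 := by positivity
    have p4 : 0 ≤ e ^ 3 := by positivity
    nlinarith
  have k5 : q ≤ c / 4 + 24 * e ^ 3 := by
    apply abs_le_of_sq_le_sq' _ (by positivity) |>.2
    calc q ^ 2 ≤ 2 * e * a * a ^ 2 := k2
      _ = 2 * e * a ^ 3 := by ring
      _ ≤ 2 * e * (6 * c * e ^ 2) := by gcongr
      _ ≤ (c / 4 + 24 * e ^ 3) ^ 2 := by nlinarith [sq_nonneg (c / 4), sq_nonneg (e ^ 3)]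
  linarith

lemma lemK (hL : 0 < L) (h : C3 L f f1 f2 f3) {φ Λ N : ℝ} (hφ0 : 0 ≤ φ) (hφ1 : φ ≤ 1)
    (he : L2norm L f ≤ N) (hN : N ≤ 1) (hΛ : N ≤ Λ) (hc : L2norm L f3 ≤ 60 * Λ) :
    L2norm L (fun x => f2 x + f x + φ * (f x ^ 2 / 2)) ^ 3 ≤ 1200000 * Λ ^ 2 * N := by
  have k1 : L2norm L (fun x => f2 x + f x + φ * (f x ^ 2 / 2)) ≤
      L2norm L f2 + L2norm L f + L2norm L (fun x => f x * f x) := by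
    have s1 := L2_add hL.le (f := fun x => f2 x + f x)
      (g := fun x => (φ / 2) * (f x * f x)) (h.c2.add h.c0)
        (continuousOn_const.mul (h.c0.mul h.c0))
    have s2 := L2_add hL.le h.c2 h.c0
    rw [L2_const_mul, abs_of_nonneg (by positivity)] at s1
    have s3 : L2norm L (fun x => f2 x + f x + φ * (f x ^ 2 / 2)) =
       L2norm L (fun x => f2 x + f x + (φ / 2) * (f x * f x)) :=
         L2_congr hL.le (fun x _ => by ring)
    have s4 := mul_le_mul_of_nonneg_right (show φ / 2 ≤ 1 by linarith)
      (L2_nonneg L (fun x => f x * f x))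
    linarith
  have k2 := L2_ff1 hL h h.c0
  have k3 := gn_a3 hL h
  have k4 := gn_b3 hL h
  have e0 := L2_nonneg L f
  have a0 := L2_nonneg L f1
  have b0 := L2_nonneg L f2
  have c0 := L2_nonneg L f3
  have q0 := L2_nonneg L (fun x => f x * f x)
  have K0 := L2_nonneg L (fun x => f2 x + f x + φ * (f x ^ 2 / 2))
  set e := L2norm L f
  set a := L2norm L f1
  set b := L2norm L f2
  set c := L2norm L f3
  set q := L2norm L (fun x => f x * f x)
  have N0 : 0 ≤ N := e0.trans he
  have Λ0 : 0 ≤ Λ := N0.trans hΛ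
  have hb : b ^ 3 ≤ 129600 * Λ ^ 2 * N := by
    calc b ^ 3 ≤ 36 * c ^ 2 * e := k4
      _ ≤ 36 * (60 * Λ) ^ 2 * N := by gcongr
      _ = _ := by ring
  have he3 : e ^ 3 ≤ Λ ^ 2 * N := by
    calc e ^ 3 = e ^ 2 * e := by ring
      _ ≤ Λ ^ 2 * N := by gcongr; linarith
  have hq : q ^ 3 ≤ 54 * Λ ^ 2 * N := by
    apply abs_le_of_sq_le_sq' _ (by positivity) |>.2
    calc (q ^ 3) ^ 2 = (q ^ 2) ^ 3 := by ring
      _ ≤ (2 * e * a * e ^ 2) ^ 3 := by gcongr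
      _ = 8 * e ^ 9 * a ^ 3 := by ring
      _ ≤ 8 * e ^ 9 * (6 * c * e ^ 2) := by gcongr
      _ = 48 * c * e ^ 11 := by ring
      _ ≤ 48 * (60 * Λ) * N ^ 11 := by gcongr
      _ = 2880 * Λ * N ^ 2 * N ^ 3 * N ^ 6 := by ring
      _ ≤ 2880 * Λ * N ^ 2 * Λ ^ 3 * 1 := by
        gcongr
        exact pow_le_one₀ N0 hN
      _ ≤ (54 * Λ ^ 2 * N) ^ 2 := by
        have : 0 ≤ Λ ^ 4 * N ^ 2 := by positivity
        nlinarith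
  calc _ ≤ (b + e + q) ^ 3 := by gcongr
    _ ≤ 9 * (b ^ 3 + e ^ 3 + q ^ 3) := by
      nlinarith [mul_nonneg (add_nonneg b0 e0) (sq_nonneg (b - e)),
        mul_nonneg (add_nonneg b0 q0) (sq_nonneg (b - q)),
        mul_nonneg (add_nonneg e0 q0) (sq_nonneg (e - q)),
        mul_nonneg b0 (sq_nonneg (e - q)), mul_nonneg e0 (sq_nonneg (b - q)),
        mul_nonneg q0 (sq_nonneg (b - e))]
    _ ≤ 9 * (129600 * Λ ^ 2 * N + Λ ^ 2 * N + 54 * Λ ^ 2 * N) := by gcongr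
    _ ≤ _ := by
      have : 0 ≤ Λ ^ 2 * N := by positivity
      nlinarith

/-- unweighted energy identity (as an inequality) -/
lemma energy0 (hL : 0 < L) (h : C3 L f f1 f2 f3) (φ : ℝ) :
    ∫ x in (0:ℝ)..L, 2 * f x * (-(f1 x + f3 x + φ * (f x * f1 x))) ≤ 0 := by
  have := ftc0 (F := fun x => -(f x ^ 2 + 2 * f x * f2 x - f1 x ^ 2 + φ * (2 / 3) * f x ^ 3))
    (F' := fun x => 2 * f x * (-(f1 x + f3 x + φ * (f x * f1 x)))) hL.le
    (((((h.c0.pow 2).add ((continuousOn_const.mul h.c0).mul h.c2)).sub (h.c1.pow 2)).add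
      (continuousOn_const.mul (h.c0.pow 3))).neg)
    (fun x hx => by
      exact (((((h.d0 x hx).fun_pow 2).fun_add (((h.d0 x hx).const_mul 2).fun_mul
        (h.d2 x hx))).fun_sub ((h.d1 x hx).fun_pow 2)).fun_add
          (((h.d0 x hx).fun_pow 3).const_mul _)).fun_neg.congr_deriv (by norm_num; ring))
    ((continuousOn_const.mul h.c0).mul ((h.c1.add h.c3).add
      (continuousOn_const.mul (h.c0.mul h.c1))).neg)
  rw [this]
  simp only [h.b0, h.bL, h.b1]
  nlinarith [sq_nonneg (f1 0)]

end

section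

variable {L : ℝ} {u u1 u2 u3 v v1 v2 v3 p p1 p2 p3 : ℝ → ℝ}

lemma lemP0 (hL : 0 < L) (hu : C3 L u u1 u2 u3) (hv : C3 L v v1 v2 v3) (hp : C3 L p p1 p2 p3)
    {κ d ψ CΦ B : ℝ} (hκ : 0 < κ) (hκL : κ * L ≤ 1) (hψ0 : 0 ≤ ψ) (hψ1 : ψ ≤ 1)
    (hCΦ : 0 ≤ CΦ) (hB : 0 ≤ B)
    (hd : |d| * L2norm L p ≤ CΦ * L2norm L (fun x => v x - u x))
    (hpB : ∀ x ∈ Icc 0 L, |p x| ≤ B) (huv : ∀ x ∈ Icc 0 L, |u x| + |v x| ≤ B) :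
    ∫ x in (0:ℝ)..L, 2 * (1 + κ * x) * (v x - u x) *
        (-((v1 x - u1 x) + (v3 x - u3 x) + (d * (p x * p1 x) + ψ * (v x * v1 x - u x * u1 x))))
      ≤ -κ * L2norm L (fun x => v1 x - u1 x) ^ 2 +
        (2 * κ + (κ + 1 / κ) * (CΦ + 1) ^ 2 * B ^ 2) * L2norm L (fun x => v x - u x) ^ 2 := by
  have hz := hv.sub hu
  -- names
  obtain ⟨z, hzdef⟩ : ∃ z : ℝ → ℝ, z = fun x => v x - u x := ⟨_, rfl⟩
  obtain ⟨z1, hz1def⟩ : ∃ z : ℝ → ℝ, z = fun x => v1 x - u1 x := ⟨_, rfl⟩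
  obtain ⟨z2, hz2def⟩ : ∃ z : ℝ → ℝ, z = fun x => v2 x - u2 x := ⟨_, rfl⟩
  obtain ⟨z3, hz3def⟩ : ∃ z : ℝ → ℝ, z = fun x => v3 x - u3 x := ⟨_, rfl⟩
  obtain ⟨Q, hQ⟩ : ∃ Q : ℝ → ℝ, Q = fun x => d * (p x) ^ 2 + ψ * ((v x) ^ 2 - (u x) ^ 2) :=
    ⟨_, rfl⟩
  rw [← hzdef, ← hz1def, ← hz2def, ← hz3def] at hz
  rw [← hzdef] at hd
  rw [← hzdef, ← hz1def]
  have cQ : ContinuousOn Q (Icc 0 L) := by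
    rw [hQ]
    exact (continuousOn_const.mul (hp.c0.pow 2)).add
      (continuousOn_const.mul ((hv.c0.pow 2).sub (hu.c0.pow 2)))
  have dQ : ∀ x ∈ Ioo 0 L, HasDerivAt Q
      (2 * (d * (p x * p1 x) + ψ * (v x * v1 x - u x * u1 x))) x := by
    intro x hx
    rw [hQ]
    exact ((((hp.d0 x hx).fun_pow 2).const_mul d).fun_add ((((hv.d0 x hx).fun_pow 2).fun_sub
      ((hu.d0 x hx).fun_pow 2)).const_mul ψ)).congr_deriv (by norm_num; ring)
  have cρ : ContinuousOn (fun x : ℝ => 1 + κ * x) (Icc 0 L) := by fun_prop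
  have cI : ContinuousOn (fun x => κ * z x ^ 2 - 3 * κ * z1 x ^ 2
      + (κ * z x + (1 + κ * x) * z1 x) * Q x) (Icc 0 L) :=
    ((continuousOn_const.mul (hz.c0.pow 2)).sub (continuousOn_const.mul (hz.c1.pow 2))).add
      (((continuousOn_const.mul hz.c0).add (cρ.mul hz.c1)).mul cQ)
  have cN : ContinuousOn (fun x => 2 * (1 + κ * x) * (v x - u x) *
        (-((v1 x - u1 x) + (v3 x - u3 x) + (d * (p x * p1 x) + ψ * (v x * v1 x - u x * u1 x)))))
      (Icc 0 L) :=
    ((continuousOn_const.mul cρ).mul (hv.c0.sub hu.c0)).mul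
      ((((hv.c1.sub hu.c1).add (hv.c3.sub hu.c3)).add
        ((continuousOn_const.mul (hp.c0.mul hp.c1)).add (continuousOn_const.mul
          ((hv.c0.mul hv.c1).sub (hu.c0.mul hu.c1))))).neg)
  have e := ftc0 (F := fun x => -((1 + κ * x) * z x ^ 2 + 2 * (1 + κ * x) * z x * z2 x -
        (1 + κ * x) * z1 x ^ 2 - 2 * κ * z x * z1 x + (1 + κ * x) * z x * Q x))
    (F' := fun x => 2 * (1 + κ * x) * (v x - u x) *
        (-((v1 x - u1 x) + (v3 x - u3 x) + (d * (p x * p1 x) + ψ * (v x * v1 x - u x * u1 x))))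
        - (κ * z x ^ 2 - 3 * κ * z1 x ^ 2 + (κ * z x + (1 + κ * x) * z1 x) * Q x)) hL.le
    ((((((cρ.mul (hz.c0.pow 2)).add (((continuousOn_const.mul cρ).mul hz.c0).mul hz.c2)).sub
      (cρ.mul (hz.c1.pow 2))).sub ((continuousOn_const.mul hz.c0).mul hz.c1)).add
      ((cρ.mul hz.c0).mul cQ)).neg)
    (fun x hx => by
      have dρ : HasDerivAt (fun x : ℝ => 1 + κ * x) κ x := by
        simpa using ((hasDerivAt_id x).const_mul κ).const_add 1
      exact ((((((dρ.fun_mul ((hz.d0 x hx).fun_pow 2)).fun_add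
        (((dρ.const_mul 2).fun_mul (hz.d0 x hx)).fun_mul (hz.d2 x hx))).fun_sub
        (dρ.fun_mul ((hz.d1 x hx).fun_pow 2))).fun_sub
        (((hz.d0 x hx).const_mul (2 * κ)).fun_mul (hz.d1 x hx))).fun_add
        ((dρ.fun_mul (hz.d0 x hx)).fun_mul (dQ x hx))).fun_neg).congr_deriv
          (by
            have q1 : v x - u x = z x := by rw [hzdef]
            have q2 : v1 x - u1 x = z1 x := by rw [hz1def]
            have q3 : v3 x - u3 x = z3 x := by rw [hz3def]
            rw [q1, q2, q3]
            norm_num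
            ring))
    (cN.sub cI)
  have iQ : IntervalIntegrable (fun x => (κ * z x + (1 + κ * x) * z1 x) * Q x) volume 0 L :=
    (((continuousOn_const.mul hz.c0).add (cρ.mul hz.c1)).mul cQ).intervalIntegrable_of_Icc hL.le
  have iz : IntervalIntegrable (fun x => κ * z x ^ 2) volume 0 L :=
    (continuousOn_const.mul (hz.c0.pow 2)).intervalIntegrable_of_Icc hL.le
  have iz1 : IntervalIntegrable (fun x => 3 * κ * z1 x ^ 2) volume 0 L :=
    (continuousOn_const.mul (hz.c1.pow 2)).intervalIntegrable_of_Icc hL.le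
  rw [intervalIntegral.integral_sub (cN.intervalIntegrable_of_Icc hL.le)
    (cI.intervalIntegrable_of_Icc hL.le), intervalIntegral.integral_add (iz.sub iz1) iQ,
    intervalIntegral.integral_sub iz iz1, intervalIntegral.integral_const_mul,
    intervalIntegral.integral_const_mul, ← L2_sq hL.le, ← L2_sq hL.le] at e
  simp only [hz.b0, hz.bL, hz.b1] at e
  -- estimates
  have nQ : L2norm L Q ≤ (CΦ + 1) * B * L2norm L z := by
    have s1 := L2_add hL.le (f := fun x => p x * (d * p x))
      (g := fun x => (ψ * (u x + v x)) * z x) (hp.c0.mul (continuousOn_const.mul hp.c0))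
        ((continuousOn_const.mul (hu.c0.add hv.c0)).mul hz.c0)
    have s2 := L2_mul_le hL.le (f := p) (g := fun x => d * p x) hp.c0
      (continuousOn_const.mul hp.c0) hB hpB
    have s3 := L2_mul_le hL.le (f := fun x => ψ * (u x + v x)) (g := z)
      (continuousOn_const.mul (hu.c0.add hv.c0)) hz.c0 hB (fun x hx => by
        rw [abs_mul, abs_of_nonneg hψ0]
        have := huv x hx
        have h2 := abs_add_le (u x) (v x)
        have h3 := abs_nonneg (u x + v x)
        nlinarith)
    rw [L2_const_mul] at s2
    have s4 : L2norm L Q = L2norm L (fun x => p x * (d * p x) + (ψ * (u x + v x)) * z x) := by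
      apply L2_congr hL.le
      intro x _
      rw [hQ, hzdef]
      ring
    rw [s4]
    have s5 := mul_le_mul_of_nonneg_left hd hB
    linarith
  have nz : L2norm L (fun x => κ * z x + (1 + κ * x) * z1 x) ≤
      κ * L2norm L z + 2 * L2norm L z1 := by
    have s1 := L2_add hL.le (f := fun x => κ * z x)
      (g := fun x => (1 + κ * x) * z1 x) (continuousOn_const.mul hz.c0) (cρ.mul hz.c1)
    have s2 := L2_mul_le hL.le (f := fun x => 1 + κ * x) (B := 2) cρ hz.c1 (by norm_num)
      (fun x hx => by
        have : 0 ≤ κ * x := mul_nonneg hκ.le hx.1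
        have h2 : κ * x ≤ κ * L := mul_le_mul_of_nonneg_left hx.2 hκ.le
        rw [abs_of_nonneg (by linarith)]
        linarith)
    rw [L2_const_mul, abs_of_pos hκ] at s1
    linarith
  have key := (abs_le.1 (cs hL.le (f := fun x => κ * z x + (1 + κ * x) * z1 x)
    ((continuousOn_const.mul hz.c0).add (cρ.mul hz.c1)) cQ)).2
  have n0 := L2_nonneg L z
  have n1 := L2_nonneg L z1
  have nn := L2_nonneg L (fun x => κ * z x + (1 + κ * x) * z1 x)
  have nnQ := L2_nonneg L Q
  have key2 := key.trans (mul_le_mul nz nQ nnQ (by positivity))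
  set n := L2norm L z
  set m := L2norm L z1
  obtain ⟨D, hD⟩ : ∃ D, D = (CΦ + 1) * B := ⟨_, rfl⟩
  have D0 : 0 ≤ D := by rw [hD]; positivity
  rw [← hD] at key2
  have hC : (κ + 1 / κ) * (CΦ + 1) ^ 2 * B ^ 2 = κ * D ^ 2 + (1 / κ) * D ^ 2 := by
    rw [hD]; ring
  rw [hC]
  have f1 : 2 * m * (D * n) ≤ κ * m ^ 2 + (1 / κ) * D ^ 2 * n ^ 2 := by
    have : 0 ≤ (1 / κ) * (κ * m - D * n) ^ 2 := by positivity
    have e2 : (1 / κ) * (κ * m - D * n) ^ 2 =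
      κ * m ^ 2 - 2 * m * (D * n) + (1 / κ) * D ^ 2 * n ^ 2 := by
      field_simp
      ring
    linarith
  have f2 : κ * n * (D * n) ≤ κ * n ^ 2 + κ * D ^ 2 * n ^ 2 := by
    have h1 : D ≤ 1 + D ^ 2 := by nlinarith [sq_nonneg (D - 1)]
    have h2 : 0 ≤ κ * n ^ 2 := by positivity
    nlinarith
  have f3 : 0 ≤ κ * m ^ 2 := by positivity
  nlinarith [sq_nonneg (z1 0)]

lemma lemP (hL : 0 < L) (hu : C3 L u u1 u2 u3) (hv : C3 L v v1 v2 v3)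
    {κ φu φv CΦ B : ℝ} (hκ : 0 < κ) (hκL : κ * L ≤ 1) (hu0 : 0 ≤ φu) (hu1 : φu ≤ 1)
    (hv0 : 0 ≤ φv) (hv1 : φv ≤ 1) (hCΦ : 0 ≤ CΦ) (hB : 0 ≤ B)
    (hd : |φv - φu| * min (L2norm L u) (L2norm L v) ≤ CΦ * |L2norm L v - L2norm L u|)
    (huv : ∀ x ∈ Icc 0 L, |u x| + |v x| ≤ B) :
    ∫ x in (0:ℝ)..L, 2 * (1 + κ * x) * (v x - u x) *
        (-((v1 x + v3 x + φv * (v x * v1 x)) - (u1 x + u3 x + φu * (u x * u1 x))))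
      ≤ -κ * L2norm L (fun x => v1 x - u1 x) ^ 2 +
        (2 * κ + (κ + 1 / κ) * (CΦ + 1) ^ 2 * B ^ 2) * L2norm L (fun x => v x - u x) ^ 2 := by
  have hd' := hd.trans (mul_le_mul_of_nonneg_left (L2_abs_sub hL.le hv.c0 hu.c0) hCΦ)
  rcases le_total (L2norm L u) (L2norm L v) with hle | hle
  · rw [min_eq_left hle] at hd'
    have := lemP0 hL hu hv hu hκ hκL hv0 hv1 hCΦ hB hd'
      (fun x hx => by linarith [huv x hx, abs_nonneg (v x)]) huv
    refine le_trans (le_of_eq ?_) this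
    apply intervalIntegral.integral_congr
    intro x _
    ring
  · rw [min_eq_right hle] at hd'
    have := lemP0 hL hu hv hv hκ hκL hu0 hu1 hCΦ hB hd'
      (fun x hx => by linarith [huv x hx, abs_nonneg (u x)]) huv
    refine le_trans (le_of_eq ?_) this
    apply intervalIntegral.integral_congr
    intro x _
    ring

end

/-! ### Abstract solutions -/

/-- the spatial part of the equation -/
def kg (u u1 u3 : ℝ → ℝ → ℝ) (φ : ℝ → ℝ) (t x : ℝ) : ℝ :=
  u1 t x + u3 t x + φ t * (u t x * u1 t x)

/-- An abstract form of the solutions. -/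
structure Sol (L T CΦ : ℝ) (u u1 u2 u3 ut : ℝ → ℝ → ℝ) (φ : ℝ → ℝ) : Prop where
  hL : 0 < L
  hT : 0 < T
  hC : 0 ≤ CΦ
  cu : Continuous (fun p : ℝ × ℝ => u p.1 p.2)
  c3 : ∀ t ∈ Icc 0 T, C3 L (u t) (u1 t) (u2 t) (u3 t)
  dt : ∀ t ∈ Ioo 0 T, ∀ x ∈ Ioo 0 L, HasDerivAt (fun s => u s x) (ut t x) t
  mt : Measurable (fun p : ℝ × ℝ => ut p.1 p.2)
  m1 : ∃ w : ℝ × ℝ → ℝ, Measurable w ∧ ∀ t ∈ Icc 0 T, ∀ x ∈ Ioo 0 L, u1 t x = w (t, x)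
  pde : ∀ t ∈ Ioo 0 T, ∀ x ∈ Ioo 0 L, ut t x = - kg u u1 u3 φ t x
  φ0 : ∀ t, 0 ≤ φ t
  φ1 : ∀ t, φ t ≤ 1
  φd : ∀ t ∈ Icc 0 T, ∀ t' ∈ Icc 0 T,
    |φ t' - φ t| * min (L2norm L (u t)) (L2norm L (u t')) ≤
      CΦ * |L2norm L (u t') - L2norm L (u t)|

lemma ftcf {L s t K : ℝ} (hL : 0 < L) (hst : s ≤ t) {G G' : ℝ → ℝ → ℝ}
    (hc : ∀ x ∈ Ioo 0 L, ContinuousOn (fun τ => G τ x) (Icc s t))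
    (hd : ∀ x ∈ Ioo 0 L, ∀ τ ∈ Ioo s t, HasDerivAt (fun τ => G τ x) (G' τ x) τ)
    (hm : Measurable (fun p : ℝ × ℝ => G' p.1 p.2))
    (hi : ∀ τ ∈ Ioo s t, IntervalIntegrable (G' τ) volume 0 L)
    (hK : ∀ τ ∈ Ioo s t, ∫ x in (0:ℝ)..L, |G' τ x| ≤ K) :
    IntervalIntegrable (fun τ => ∫ x in (0:ℝ)..L, G' τ x) volume s t ∧
    ∫ x in (0:ℝ)..L, (G t x - G s x) = ∫ τ in s..t, ∫ x in (0:ℝ)..L, G' τ x := by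
  have e1 : ∀ f : ℝ → ℝ, ∫ x in (0:ℝ)..L, f x = ∫ x in Ioo 0 L, f x := fun f => by
    rw [intervalIntegral.integral_of_le hL.le, integral_Ioc_eq_integral_Ioo]
  have e2 : ∀ f : ℝ → ℝ, ∫ x in s..t, f x = ∫ x in Ioo s t, f x := fun f => by
    rw [intervalIntegral.integral_of_le hst, integral_Ioc_eq_integral_Ioo]
  have hint : Integrable (fun p : ℝ × ℝ => G' p.1 p.2)
      ((volume.restrict (Ioo s t)).prod (volume.restrict (Ioo 0 L))) := by
    rw [integrable_prod_iff hm.aestronglyMeasurable]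
    constructor
    · filter_upwards [ae_restrict_mem measurableSet_Ioo] with τ hτ
      have := hi τ hτ
      rw [intervalIntegrable_iff_integrableOn_Ioo_of_le hL.le] at this
      exact this
    · apply Measure.integrableOn_of_bounded (M := K)
      · simp
      · exact (hm.norm.stronglyMeasurable.integral_prod_right).aestronglyMeasurable
      · filter_upwards [ae_restrict_mem measurableSet_Ioo] with τ hτ
        rw [Real.norm_of_nonneg (integral_nonneg (fun x => norm_nonneg _))]
        have := hK τ hτ
        rw [e1] at this
        exact this
  constructor
  · rw [intervalIntegrable_iff_integrableOn_Ioo_of_le hst]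
    simp only [e1]
    exact hint.integral_prod_left
  · rw [e2]
    simp only [e1]
    rw [integral_integral_swap hint]
    apply integral_congr_ae
    filter_upwards [ae_restrict_mem measurableSet_Ioo, hint.prod_left_ae] with x hx hxi
    rw [← e2]
    symm
    apply intervalIntegral.integral_eq_sub_of_hasDerivAt_of_le hst (hc x hx) (hd x hx)
    rw [intervalIntegrable_iff_integrableOn_Ioo_of_le hst]
    exact hxi

lemma fatou {L K t : ℝ} (hL : 0 < L) (hK : 0 ≤ K) {u : ℝ → ℝ → ℝ} {g : ℝ → ℝ}
    (hg : ContinuousOn g (Icc 0 L))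
    (hu : ∀ s, Continuous (u s))
    (hd : ∀ x ∈ Ioo 0 L, HasDerivAt (fun s => u s x) (g x) t) {δ : ℝ} (hδ : 0 < δ)
    (hb : ∀ h, 0 < h → h < δ → L2norm L (fun x => u (t + h) x - u t x) ≤ K * h) :
    L2norm L g ≤ K := by
  have e1 : ∀ f : ℝ → ℝ, ∫ x in (0:ℝ)..L, f x = ∫ x in Ioo 0 L, f x := fun f => by
    rw [intervalIntegral.integral_of_le hL.le, integral_Ioc_eq_integral_Ioo]
  have e2 : ∀ f : ℝ → ℝ, ContinuousOn f (Icc 0 L) →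
      ∫⁻ x in Ioo 0 L, ENNReal.ofReal (f x ^ 2) = ENNReal.ofReal (L2norm L f ^ 2) := by
    intro f hf
    rw [L2_sq hL.le, e1, ofReal_integral_eq_lintegral_ofReal]
    · have := (hf.pow 2).intervalIntegrable_of_Icc (μ := volume) hL.le
      rw [intervalIntegrable_iff_integrableOn_Ioo_of_le hL.le] at this
      exact this
    · exact Filter.Eventually.of_forall (fun x => sq_nonneg _)
  obtain ⟨N, hN⟩ : ∃ N : ℕ, 1 / δ < N := exists_nat_gt _
  set hs : ℕ → ℝ := fun n => 1 / ((n : ℝ) + N + 1)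
  have hs0 : ∀ n, 0 < hs n := fun n => by positivity
  have hs1 : ∀ n, hs n < δ := fun n => by
    have : 0 < (n : ℝ) + N + 1 := by positivity
    simp only [hs]
    rw [div_lt_iff₀ this]
    rw [div_lt_iff₀ hδ] at hN
    have : 0 ≤ (n : ℝ) := by positivity
    nlinarith
  have hlim : Filter.Tendsto hs Filter.atTop (nhds 0) := by
    have := (tendsto_one_div_add_atTop_nhds_zero_nat (𝕜 := ℝ)).comp (Filter.tendsto_add_atTop_nat N)
    refine this.congr (fun n => ?_)
    simp [hs]
  set F : ℕ → ℝ → ℝ := fun n x => (hs n)⁻¹ * (u (t + hs n) x - u t x)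
  have hF : ∀ n, Continuous (F n) := fun n => continuous_const.mul ((hu _).sub (hu _))
  have hFn : ∀ n, L2norm L (F n) ≤ K := by
    intro n
    simp only [F]
    rw [L2_const_mul, abs_of_pos (inv_pos.2 (hs0 n)), inv_mul_le_iff₀ (hs0 n)]
    have := hb _ (hs0 n) (hs1 n)
    linarith
  have hlimF : ∀ x ∈ Ioo 0 L, Filter.Tendsto (fun n => F n x) Filter.atTop (nhds (g x)) := by
    intro x hx
    have := (hasDerivAt_iff_tendsto_slope_zero.1 (hd x hx)).comp
      (tendsto_nhdsWithin_iff.2 ⟨hlim, Filter.Eventually.of_forall (fun n => (hs0 n).ne')⟩)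
    simpa [Function.comp_def, F] using this
  have main : ENNReal.ofReal (L2norm L g ^ 2) ≤ ENNReal.ofReal (K ^ 2) := by
    rw [← e2 g hg]
    calc ∫⁻ x in Ioo 0 L, ENNReal.ofReal (g x ^ 2)
        = ∫⁻ x in Ioo 0 L, Filter.liminf (fun n => ENNReal.ofReal (F n x ^ 2)) Filter.atTop := by
          apply lintegral_congr_ae
          filter_upwards [ae_restrict_mem measurableSet_Ioo] with x hx
          rw [Filter.Tendsto.liminf_eq]
          exact (ENNReal.continuous_ofReal.tendsto _).comp ((hlimF x hx).pow 2)
      _ ≤ Filter.liminf (fun n => ∫⁻ x in Ioo 0 L, ENNReal.ofReal (F n x ^ 2)) Filter.atTop := by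
          apply lintegral_liminf_le
          intro n
          exact ((hF n).pow 2).measurable.ennreal_ofReal
      _ ≤ Filter.liminf (fun _ : ℕ => ENNReal.ofReal (K ^ 2)) Filter.atTop := by
          refine Filter.liminf_le_liminf (Filter.Eventually.of_forall (fun n => ?_))
          rw [e2 _ (hF n).continuousOn]
          apply ENNReal.ofReal_le_ofReal
          have := hFn n
          have := L2_nonneg L (F n)
          gcongr
      _ = _ := by simp
  rw [ENNReal.ofReal_le_ofReal_iff (by positivity)] at main
  exact abs_le_of_sq_le_sq' main hK |>.2

section

variable {L T CΦ : ℝ} {u u1 u2 u3 ut : ℝ → ℝ → ℝ} {φ : ℝ → ℝ}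

lemma Sol.cux (h : Sol L T CΦ u u1 u2 u3 ut φ) (t : ℝ) : Continuous (u t) :=
  h.cu.comp (Continuous.prodMk_right t)

lemma Sol.cutime (h : Sol L T CΦ u u1 u2 u3 ut φ) (x : ℝ) : Continuous (fun t => u t x) :=
  h.cu.comp (Continuous.prodMk_left x)

lemma Sol.ckg (h : Sol L T CΦ u u1 u2 u3 ut φ) {t : ℝ} (ht : t ∈ Icc 0 T) :
    ContinuousOn (kg u u1 u3 φ t) (Icc 0 L) :=
  ((h.c3 t ht).c1.add (h.c3 t ht).c3).add
    (continuousOn_const.mul ((h.c3 t ht).c0.mul (h.c3 t ht).c1))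

/-- replacing `ut` by the spatial terms under an integral -/
lemma Sol.int_congr (h : Sol L T CΦ u u1 u2 u3 ut φ) {f g : ℝ → ℝ}
    (hfg : ∀ x ∈ Ioo 0 L, f x = g x) :
    ∫ x in (0:ℝ)..L, f x = ∫ x in (0:ℝ)..L, g x := by
  rw [intervalIntegral.integral_of_le h.hL.le, intervalIntegral.integral_of_le h.hL.le,
    integral_Ioc_eq_integral_Ioo, integral_Ioc_eq_integral_Ioo]
  exact setIntegral_congr_fun measurableSet_Ioo hfg

lemma Sol.ii_congr (h : Sol L T CΦ u u1 u2 u3 ut φ) {f g : ℝ → ℝ}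
    (hf : ContinuousOn g (Icc 0 L)) (hfg : ∀ x ∈ Ioo 0 L, f x = g x) :
    IntervalIntegrable f volume 0 L := by
  have := hf.intervalIntegrable_of_Icc (μ := volume) h.hL.le
  rw [intervalIntegrable_iff_integrableOn_Ioo_of_le h.hL.le] at this ⊢
  exact this.congr_fun (fun x hx => (hfg x hx).symm) measurableSet_Ioo

/-- Fundamental identity with derivative `P τ x * ut τ x + Q τ x * ut (τ+h) x`. -/
lemma Sol.ident (h : Sol L T CΦ u u1 u2 u3 ut φ) {s t r K M : ℝ} (hs : 0 ≤ s) (hst : s ≤ t)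
    (hr : 0 ≤ r) (ht : t + r ≤ T) {G P Q : ℝ → ℝ → ℝ}
    (hG : Continuous (fun p : ℝ × ℝ => G p.1 p.2))
    (hP : Continuous (fun p : ℝ × ℝ => P p.1 p.2)) (hQ : Continuous (fun p : ℝ × ℝ => Q p.1 p.2))
    (hM : 0 ≤ M)
    (hPM : ∀ τ ∈ Ioo s t, ∀ x ∈ Icc 0 L, |P τ x| ≤ M)
    (hQM : ∀ τ ∈ Ioo s t, ∀ x ∈ Icc 0 L, |Q τ x| ≤ M)
    (hd : ∀ τ ∈ Ioo s t, ∀ x ∈ Ioo 0 L, HasDerivAt (fun τ => G τ x)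
      (P τ x * ut τ x + Q τ x * ut (τ + r) x) τ)
    (hK : ∀ τ ∈ Ioo s (t + r), L2norm L (kg u u1 u3 φ τ) ≤ K) :
    ∃ D : ℝ → ℝ, IntervalIntegrable D volume s t ∧
      (∀ τ ∈ Ioo s t, D τ = ∫ x in (0:ℝ)..L,
        (P τ x * (-kg u u1 u3 φ τ x) + Q τ x * (-kg u u1 u3 φ (τ + r) x))) ∧
      (∫ x in (0:ℝ)..L, G t x) - (∫ x in (0:ℝ)..L, G s x) = ∫ τ in s..t, D τ := by
  have hL := h.hL
  have mem : ∀ τ ∈ Ioo s t, τ ∈ Ioo 0 T ∧ τ + r ∈ Ioo 0 T := fun τ hτ =>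
    ⟨⟨by linarith [hτ.1], by linarith [hτ.2]⟩, ⟨by linarith [hτ.1], by linarith [hτ.2]⟩⟩
  have cP : ∀ τ, ContinuousOn (P τ) (Icc 0 L) := fun τ =>
    (hP.comp (Continuous.prodMk_right τ)).continuousOn
  have cQ : ∀ τ, ContinuousOn (Q τ) (Icc 0 L) := fun τ =>
    (hQ.comp (Continuous.prodMk_right τ)).continuousOn
  have cg : ∀ τ ∈ Ioo s t, ContinuousOn (fun x => P τ x * (-kg u u1 u3 φ τ x) +
      Q τ x * (-kg u u1 u3 φ (τ + r) x)) (Icc 0 L) := fun τ hτ =>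
    ((cP τ).mul (h.ckg (Ioo_subset_Icc_self (mem τ hτ).1)).neg).add
      ((cQ τ).mul (h.ckg (Ioo_subset_Icc_self (mem τ hτ).2)).neg)
  have eq : ∀ τ ∈ Ioo s t, ∀ x ∈ Ioo 0 L, P τ x * ut τ x + Q τ x * ut (τ + r) x =
      P τ x * (-kg u u1 u3 φ τ x) + Q τ x * (-kg u u1 u3 φ (τ + r) x) := fun τ hτ x hx => by
    rw [h.pde τ (mem τ hτ).1 x hx, h.pde _ (mem τ hτ).2 x hx]
  have key := ftcf (G := G) (G' := fun τ x => P τ x * ut τ x + Q τ x * ut (τ + r) x)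
    (K := Real.sqrt L * (2 * M * K)) hL hst
    (fun x _ => (hG.comp (Continuous.prodMk_left x)).continuousOn)
    (fun x hx τ hτ => hd τ hτ x hx)
    ((hP.measurable.mul h.mt).add (hQ.measurable.mul
      (h.mt.comp ((measurable_fst.add_const r).prodMk measurable_snd))))
    (fun τ hτ => h.ii_congr (cg τ hτ) (eq τ hτ))
    (fun τ hτ => by
      rw [h.int_congr (g := fun x => 1 * |P τ x * (-kg u u1 u3 φ τ x) +
        Q τ x * (-kg u u1 u3 φ (τ + r) x)|) (fun x hx => by rw [eq τ hτ x hx, one_mul])]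
      refine (le_abs_self _).trans ((cs hL.le continuousOn_const (cg τ hτ).abs).trans ?_)
      rw [L2_const hL.le, abs_one, one_mul, L2_abs]
      apply mul_le_mul_of_nonneg_left _ (Real.sqrt_nonneg _)
      refine (L2_add hL.le (f := fun x => P τ x * (-kg u u1 u3 φ τ x))
        (g := fun x => Q τ x * (-kg u u1 u3 φ (τ + r) x)) ((cP τ).mul (h.ckg (Ioo_subset_Icc_self (mem τ hτ).1)).neg)
        ((cQ τ).mul (h.ckg (Ioo_subset_Icc_self (mem τ hτ).2)).neg)).trans ?_
      have k1 := L2_mul_le hL.le (cP τ) (h.ckg (Ioo_subset_Icc_self (mem τ hτ).1)).neg hM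
        (hPM τ hτ)
      have k2 := L2_mul_le hL.le (cQ τ) (h.ckg (Ioo_subset_Icc_self (mem τ hτ).2)).neg hM
        (hQM τ hτ)
      have k3 : L2norm L (-kg u u1 u3 φ τ) ≤ K :=
        (L2_neg (L := L) (kg u u1 u3 φ τ)).le.trans (hK τ ⟨hτ.1, by linarith [hτ.2]⟩)
      have k4 : L2norm L (-kg u u1 u3 φ (τ + r)) ≤ K :=
        (L2_neg (L := L) (kg u u1 u3 φ (τ + r))).le.trans
          (hK _ ⟨by linarith [hτ.1], by linarith [hτ.2]⟩)
      have k5 := mul_le_mul_of_nonneg_left k3 hM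
      have k6 := mul_le_mul_of_nonneg_left k4 hM
      simp only [Pi.neg_apply] at *
      linarith)
  refine ⟨_, key.1, fun τ hτ => h.int_congr (eq τ hτ), ?_⟩
  rw [← key.2, intervalIntegral.integral_sub]
  · exact (hG.comp (Continuous.prodMk_right t)).intervalIntegrable _ _
  · exact (hG.comp (Continuous.prodMk_right s)).intervalIntegrable _ _

/-- uniform bound for `u` on the box -/
lemma Sol.bdd (h : Sol L T CΦ u u1 u2 u3 ut φ) :
    ∃ M, 0 ≤ M ∧ ∀ t ∈ Icc 0 T, ∀ x ∈ Icc 0 L, |u t x| ≤ M := by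
  obtain ⟨M, hM⟩ := (isCompact_Icc.prod isCompact_Icc).exists_bound_of_continuousOn
    (s := Icc 0 T ×ˢ Icc 0 L) h.cu.continuousOn
  refine ⟨M, (norm_nonneg _).trans (hM (0, 0) ⟨⟨le_rfl, h.hT.le⟩, ⟨le_rfl, h.hL.le⟩⟩),
    fun t ht x hx => hM (t, x) ⟨ht, hx⟩⟩

end

/-! ### Energy estimates -/

/-- weighted energy -/
noncomputable def EE (L κ : ℝ) (z : ℝ → ℝ) : ℝ := ∫ x in (0:ℝ)..L, (1 + κ * x) * z x ^ 2

lemma EE_bounds {L κ : ℝ} (hL : 0 < L) (hκ : 0 ≤ κ) (hκL : κ * L ≤ 1) {z : ℝ → ℝ}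
    (hz : ContinuousOn z (Icc 0 L)) :
    L2norm L z ^ 2 ≤ EE L κ z ∧ EE L κ z ≤ 2 * L2norm L z ^ 2 := by
  have cρ : ContinuousOn (fun x : ℝ => 1 + κ * x) (Icc 0 L) := by fun_prop
  have i1 : IntervalIntegrable (fun x => (1 + κ * x) * z x ^ 2) volume 0 L :=
    (cρ.mul (hz.pow 2)).intervalIntegrable_of_Icc hL.le
  have i2 : IntervalIntegrable (fun x => z x ^ 2) volume 0 L :=
    (hz.pow 2).intervalIntegrable_of_Icc hL.le
  rw [L2_sq hL.le, ← intervalIntegral.integral_const_mul]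
  constructor
  · apply intervalIntegral.integral_mono_on hL.le i2 i1
    intro x hx
    have : 0 ≤ κ * x := mul_nonneg hκ hx.1
    nlinarith [sq_nonneg (z x)]
  · apply intervalIntegral.integral_mono_on hL.le i1 (i2.const_mul 2)
    intro x hx
    have : 0 ≤ κ * x := mul_nonneg hκ hx.1
    have h2 : κ * x ≤ κ * L := mul_le_mul_of_nonneg_left hx.2 hκ
    nlinarith [sq_nonneg (z x)]

lemma EE_nonneg {L κ : ℝ} (hL : 0 < L) (hκ : 0 ≤ κ) (z : ℝ → ℝ) : 0 ≤ EE L κ z := by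
  apply intervalIntegral.integral_nonneg hL.le
  intro x hx
  have : 0 ≤ κ * x := mul_nonneg hκ hx.1
  positivity

lemma EE_cont {κ L : ℝ} {z : ℝ → ℝ → ℝ} (hz : Continuous (fun p : ℝ × ℝ => z p.1 p.2)) :
    Continuous (fun τ => EE L κ (z τ)) := by
  unfold EE
  apply intervalIntegral.continuous_parametric_intervalIntegral_of_continuous'
  have : Continuous (fun p : ℝ × ℝ => (1 + κ * p.2) * z p.1 p.2 ^ 2) := by fun_prop
  exact this

section

variable {L T CΦ : ℝ} {u u1 u2 u3 ut : ℝ → ℝ → ℝ} {φ : ℝ → ℝ}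

lemma Sol.double (h : Sol L T CΦ u u1 u2 u3 ut φ) {κ s t r K m : ℝ} (hκ : 0 < κ)
    (hκL : κ * L ≤ 1) (hs : 0 ≤ s) (hst : s ≤ t) (hr : 0 ≤ r) (ht : t + r ≤ T)
    (hK : ∀ τ ∈ Ioo s (t + r), L2norm L (kg u u1 u3 φ τ) ≤ K)
    {γ : ℝ → ℝ} (hγi : IntervalIntegrable γ volume s t)
    (hγ : ∀ τ ∈ Ioo s t, ∃ B, 0 ≤ B ∧ (∀ x ∈ Icc 0 L, |u τ x| + |u (τ + r) x| ≤ B) ∧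
      2 * κ + (κ + 1 / κ) * (CΦ + 1) ^ 2 * B ^ 2 ≤ γ τ)
    (hγ2 : ∫ τ in s..t, γ τ ≤ 1 / 2) (hm0 : 0 ≤ m)
    (hm : ∀ τ ∈ Ioo s t, m ≤ L2norm L (fun x => u1 (τ + r) x - u1 τ x) ^ 2) :
    EE L κ (fun x => u (t + r) x - u t x) + κ * m * (t - s) ≤
      2 * EE L κ (fun x => u (s + r) x - u s x) := by
  have hL := h.hL
  obtain ⟨M, hM0, hM⟩ := h.bdd
  set E : ℝ → ℝ := fun τ => EE L κ (fun x => u (τ + r) x - u τ x) with hE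
  have cu := h.cu
  have cur : Continuous (fun p : ℝ × ℝ => u (p.1 + r) p.2) :=
    h.cu.comp ((continuous_fst.add continuous_const).prodMk continuous_snd)
  have cE : Continuous E := EE_cont (cur.sub cu)
  have γ0 : ∀ τ ∈ Ioo s t, 0 ≤ γ τ := fun τ hτ => by
    obtain ⟨B, hB, _, h2⟩ := hγ τ hτ
    have : 0 ≤ 2 * κ + (κ + 1 / κ) * (CΦ + 1) ^ 2 * B ^ 2 := by positivity
    linarith
  obtain ⟨ts, hts, htsmax⟩ := isCompact_Icc.exists_isMaxOn ⟨s, left_mem_Icc.2 hst⟩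
    cE.continuousOn
  have Emax : ∀ τ ∈ Icc s t, E τ ≤ E ts := fun τ hτ => htsmax hτ
  have E0 : ∀ τ, 0 ≤ E τ := fun τ => EE_nonneg hL hκ.le _
  -- main integrated inequality
  have main : ∀ τ ∈ Icc s t, E τ + κ * m * (τ - s) ≤ E s + E ts / 2 := by
    intro σ hσ
    obtain ⟨D, hDi, hD, hDe⟩ := h.ident (s := s) (t := σ) (r := r) (K := K) (M := 8 * M) hs hσ.1
      hr (by linarith [hσ.2])
      (G := fun τ x => (1 + κ * x) * (u (τ + r) x - u τ x) ^ 2)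
      (P := fun τ x => -(2 * (1 + κ * x) * (u (τ + r) x - u τ x)))
      (Q := fun τ x => 2 * (1 + κ * x) * (u (τ + r) x - u τ x))
      (by fun_prop) (by fun_prop) (by fun_prop) (by positivity)
      (fun τ hτ x hx => by
        have k1 := hM τ ⟨by linarith [hτ.1], by linarith [hτ.2, hσ.2]⟩ x hx
        have k2 := hM (τ + r) ⟨by linarith [hτ.1], by linarith [hτ.2, hσ.2]⟩ x hx
        have q0 : 0 ≤ κ * x := mul_nonneg hκ.le hx.1
        have q1 : κ * x ≤ κ * L := mul_le_mul_of_nonneg_left hx.2 hκ.le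
        rw [abs_neg, abs_mul, abs_of_nonneg (by linarith : 0 ≤ 2 * (1 + κ * x))]
        have q2 := (abs_sub (u (τ + r) x) (u τ x)).trans (add_le_add k2 k1)
        have q3 := abs_nonneg (u (τ + r) x - u τ x)
        nlinarith)
      (fun τ hτ x hx => by
        have k1 := hM τ ⟨by linarith [hτ.1], by linarith [hτ.2, hσ.2]⟩ x hx
        have k2 := hM (τ + r) ⟨by linarith [hτ.1], by linarith [hτ.2, hσ.2]⟩ x hx
        have q0 : 0 ≤ κ * x := mul_nonneg hκ.le hx.1
        have q1 : κ * x ≤ κ * L := mul_le_mul_of_nonneg_left hx.2 hκ.le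
        rw [abs_mul, abs_of_nonneg (by linarith : 0 ≤ 2 * (1 + κ * x))]
        have q2 := (abs_sub (u (τ + r) x) (u τ x)).trans (add_le_add k2 k1)
        have q3 := abs_nonneg (u (τ + r) x - u τ x)
        nlinarith)
      (fun τ hτ x hx => by
        have d1 := h.dt τ ⟨by linarith [hτ.1], by linarith [hτ.2, hσ.2]⟩ x hx
        have d2 := h.dt (τ + r) ⟨by linarith [hτ.1], by linarith [hτ.2, hσ.2]⟩ x hx
        have d3 : HasDerivAt (fun τ => u (τ + r) x) (ut (τ + r) x) τ := by
          simpa using d2.comp_add_const τ r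
        exact (((d3.fun_sub d1).fun_pow 2).const_mul (1 + κ * x)).congr_deriv
          (by norm_num; ring))
      (fun τ hτ => hK τ ⟨hτ.1, by linarith [hτ.2, hσ.2]⟩)
    have hDle : ∀ τ ∈ Ioo s σ, D τ ≤ -(κ * m) + γ τ * E ts := by
      intro τ hτ
      have hτt : τ ∈ Ioo s t := ⟨hτ.1, by linarith [hτ.2, hσ.2]⟩
      have hτ0 : τ ∈ Icc 0 T := ⟨by linarith [hτ.1], by linarith [hτt.2]⟩
      have hτr : τ + r ∈ Icc 0 T := ⟨by linarith [hτ.1], by linarith [hτt.2]⟩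
      obtain ⟨B, hB0, hB, hBγ⟩ := hγ τ hτt
      rw [hD τ hτ]
      have p := lemP hL (h.c3 τ hτ0) (h.c3 _ hτr) hκ hκL (h.φ0 τ) (h.φ1 τ) (h.φ0 (τ + r))
        (h.φ1 (τ + r)) h.hC hB0 (h.φd τ hτ0 _ hτr) hB
      have e : ∫ x in (0:ℝ)..L, (-(2 * (1 + κ * x) * (u (τ + r) x - u τ x)) *
          (-kg u u1 u3 φ τ x) + 2 * (1 + κ * x) * (u (τ + r) x - u τ x) *
          (-kg u u1 u3 φ (τ + r) x)) = ∫ x in (0:ℝ)..L, 2 * (1 + κ * x) *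
          (u (τ + r) x - u τ x) * (-((u1 (τ + r) x + u3 (τ + r) x + φ (τ + r) *
          (u (τ + r) x * u1 (τ + r) x)) - (u1 τ x + u3 τ x + φ τ * (u τ x * u1 τ x)))) := by
        apply intervalIntegral.integral_congr
        intro x _
        simp only [kg]
        ring
      rw [e]
      refine p.trans ?_
      have hm' := hm τ hτt
      have b1 := (EE_bounds hL hκ.le hκL (z := fun x => u (τ + r) x - u τ x)
        ((h.cux _).sub (h.cux _)).continuousOn).1
      have b2 : E τ ≤ E ts := Emax τ ⟨hτ.1.le, hτt.2.le⟩
      have b3 : L2norm L (fun x => u (τ + r) x - u τ x) ^ 2 ≤ E ts := b1.trans b2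
      have b4 := mul_le_mul_of_nonneg_left hm' hκ.le
      have b5 : (2 * κ + (κ + 1 / κ) * (CΦ + 1) ^ 2 * B ^ 2) *
          L2norm L (fun x => u (τ + r) x - u τ x) ^ 2 ≤ γ τ * E ts :=
        mul_le_mul hBγ b3 (sq_nonneg _) (γ0 τ hτt)
      linarith
    have hsub : Set.uIcc s σ ⊆ Set.uIcc s t := by
      rw [uIcc_of_le hσ.1, uIcc_of_le hst]
      exact Icc_subset_Icc_right hσ.2
    have i1 : IntervalIntegrable γ volume s σ := hγi.mono_set hsub
    have i2 : IntervalIntegrable (fun τ => γ τ * E ts) volume s σ := i1.mul_const _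
    have I := intervalIntegral.integral_mono_on_of_le_Ioo hσ.1 hDi
      (g := fun τ => -(κ * m) + γ τ * E ts)
      ((intervalIntegrable_const).add i2) hDle
    rw [intervalIntegral.integral_add intervalIntegrable_const i2,
      intervalIntegral.integral_mul_const, intervalIntegral.integral_const, ← hDe] at I
    have I2 : ∫ τ in s..σ, γ τ ≤ ∫ τ in s..t, γ τ := by
      have i3 : IntervalIntegrable γ volume σ t :=
        hγi.mono_set (by rw [uIcc_of_le hσ.2, uIcc_of_le hst]; exact Icc_subset_Icc_left hσ.1)
      have := intervalIntegral.integral_add_adjacent_intervals i1 i3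
      have : ∫ τ in σ..t, (0:ℝ) ≤ ∫ τ in σ..t, γ τ :=
        intervalIntegral.integral_mono_on_of_le_Ioo hσ.2 intervalIntegrable_const
          (hγi.mono_set (by rw [uIcc_of_le hσ.2, uIcc_of_le hst]; exact Icc_subset_Icc_left hσ.1))
          (fun τ hτ => γ0 τ ⟨by linarith [hτ.1, hσ.1], hτ.2⟩)
      simp only [intervalIntegral.integral_zero] at this
      linarith
    have I3 := mul_le_mul_of_nonneg_right (I2.trans hγ2) (E0 ts)
    simp only [smul_eq_mul] at I
    have I4 : E σ - E s = (∫ x in (0:ℝ)..L, (1 + κ * x) * (u (σ + r) x - u σ x) ^ 2) -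
      ∫ x in (0:ℝ)..L, (1 + κ * x) * (u (s + r) x - u s x) ^ 2 := rfl
    rw [← I4] at I
    linarith
  have m1 := main ts hts
  have m2 := main t (right_mem_Icc.2 hst)
  have : 0 ≤ κ * m * (ts - s) := by
    have := hts.1
    have : 0 ≤ ts - s := by linarith
    positivity
  show E t + _ ≤ 2 * E s
  linarith

/-- identity for the difference with a fixed function -/
lemma Sol.fixed (h : Sol L T CΦ u u1 u2 u3 ut φ) {κ s t K : ℝ} (hκ : 0 ≤ κ)
    (hκL : κ * L ≤ 1) (hs : 0 ≤ s) (hst : s ≤ t) (ht : t ≤ T)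
    (hK : ∀ τ ∈ Ioo s t, L2norm L (kg u u1 u3 φ τ) ≤ K)
    {w : ℝ → ℝ} (hw : Continuous w) :
    ∃ D : ℝ → ℝ, IntervalIntegrable D volume s t ∧
      (∀ τ ∈ Ioo s t, D τ = ∫ x in (0:ℝ)..L,
        2 * (1 + κ * x) * (u τ x - w x) * (-kg u u1 u3 φ τ x)) ∧
      EE L κ (fun x => u t x - w x) - EE L κ (fun x => u s x - w x) = ∫ τ in s..t, D τ := by
  obtain ⟨M, hM0, hM⟩ := h.bdd
  obtain ⟨M', hM'⟩ := isCompact_Icc.exists_bound_of_continuousOn (s := Icc 0 L)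
    (f := w) hw.continuousOn
  have hM'0 : 0 ≤ M' := (norm_nonneg _).trans (hM' 0 ⟨le_rfl, h.hL.le⟩)
  have cu := h.cu
  obtain ⟨D, hDi, hD, hDe⟩ := h.ident (s := s) (t := t) (r := 0) (K := K) (M := 4 * (M + M')) hs
      hst le_rfl (by linarith)
      (G := fun τ x => (1 + κ * x) * (u τ x - w x) ^ 2)
      (P := fun τ x => 2 * (1 + κ * x) * (u τ x - w x))
      (Q := fun τ x => 0)
      (by fun_prop) (by fun_prop) (by fun_prop) (by positivity)
      (fun τ hτ x hx => by
        have k1 := hM τ ⟨by linarith [hτ.1], by linarith [hτ.2]⟩ x hx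
        have k2 := hM' x hx
        have q0 : 0 ≤ κ * x := mul_nonneg hκ hx.1
        have q1 : κ * x ≤ κ * L := mul_le_mul_of_nonneg_left hx.2 hκ
        rw [abs_mul, abs_of_nonneg (by linarith : 0 ≤ 2 * (1 + κ * x))]
        have q2 := (abs_sub (u τ x) (w x)).trans (add_le_add k1 k2)
        have q3 := abs_nonneg (u τ x - w x)
        nlinarith)
      (fun τ hτ x hx => by
        rw [abs_zero]
        positivity)
      (fun τ hτ x hx => by
        have d1 := h.dt τ ⟨by linarith [hτ.1], by linarith [hτ.2]⟩ x hx
        exact (((d1.sub_const (w x)).fun_pow 2).const_mul (1 + κ * x)).congr_deriv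
          (by norm_num; ring))
      (fun τ hτ => hK τ ⟨hτ.1, by linarith [hτ.2]⟩)
  refine ⟨D, hDi, fun τ hτ => ?_, hDe⟩
  rw [hD τ hτ]
  simp

end

/-! ### Part I: local propagation of regularity -/

section

variable {L T CΦ : ℝ} {u u1 u2 u3 ut : ℝ → ℝ → ℝ} {φ : ℝ → ℝ}

lemma Sol.west (h : Sol L T CΦ u u1 u2 u3 ut φ) {κ a t R M C : ℝ} (hκ : 0 < κ)
    (hκL : κ * L ≤ 1) (ha : 0 ≤ a) (hat : a < t) (ht : t ≤ T)
    (hM0 : 0 ≤ M) (hM : ∀ t ∈ Icc 0 T, ∀ x ∈ Icc 0 L, |u t x| ≤ M)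
    (hC : 2 * κ + (κ + 1 / κ) * (CΦ + 1) ^ 2 * (2 * M) ^ 2 ≤ C)
    (hCt : C * (t - a) ≤ 1 / 2)
    (hR : L2norm L (kg u u1 u3 φ a) ≤ R)
    (hK : ∀ s ∈ Ioo a t, ∃ K, ∀ τ ∈ Ioo s t, L2norm L (kg u u1 u3 φ τ) ≤ K) :
    EE L κ (fun x => u t x - u a x) ≤ (8 * R * (t - a)) ^ 2 := by
  have hL := h.hL
  have R0 : 0 ≤ R := (L2_nonneg _ _).trans hR
  have C0 : 0 ≤ C := by
    have : 0 ≤ 2 * κ + (κ + 1 / κ) * (CΦ + 1) ^ 2 * (2 * M) ^ 2 := by positivity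
    linarith
  set W : ℝ → ℝ := fun τ => EE L κ (fun x => u τ x - u a x) with hW
  have cu := h.cu
  have cua : Continuous (fun p : ℝ × ℝ => u a p.2) := (h.cux a).comp continuous_snd
  have cW : Continuous W := EE_cont (z := fun τ x => u τ x - u a x) (cu.sub cua)
  obtain ⟨ts, hts, htsmax⟩ := isCompact_Icc.exists_isMaxOn ⟨a, left_mem_Icc.2 hat.le⟩
    cW.continuousOn
  have Wmax : ∀ τ ∈ Icc a t, W τ ≤ W ts := fun τ hτ => htsmax hτ
  have W0 : ∀ τ, 0 ≤ W τ := fun τ => EE_nonneg hL hκ.le _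
  have Wa : W a = 0 := by simp [hW, EE]
  have ha0 : a ∈ Icc 0 T := ⟨ha, by linarith⟩
  suffices hfin : W ts ≤ (8 * R * (t - a)) ^ 2 from
    (Wmax t (right_mem_Icc.2 hat.le)).trans hfin
  rcases hts.1.eq_or_lt with hta | hta
  · rw [← hta, Wa]; positivity
  set g := Real.sqrt (W ts) with hg
  have g2 : g ^ 2 = W ts := Real.sq_sqrt (W0 _)
  have g0 : 0 ≤ g := Real.sqrt_nonneg _
  have main : ∀ s ∈ Ioo a ts, W ts ≤ W s + (ts - s) * (C * W ts + 4 * R * g) := by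
    intro s hs
    obtain ⟨K, hK⟩ := hK s ⟨hs.1, by linarith [hs.2, hts.2]⟩
    obtain ⟨D, hDi, hD, hDe⟩ := h.fixed (s := s) (t := ts) hκ.le hκL (by linarith [hs.1])
      hs.2.le (by linarith [hts.2]) (fun τ hτ => hK τ ⟨hτ.1, by linarith [hτ.2, hts.2]⟩)
      (h.cux a)
    have hDle : ∀ τ ∈ Ioo s ts, D τ ≤ C * W ts + 4 * R * g := by
      intro τ hτ
      have hτ0 : τ ∈ Icc 0 T := ⟨by linarith [hτ.1, hs.1], by linarith [hτ.2, hts.2]⟩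
      rw [hD τ hτ]
      have p := lemP hL (h.c3 a ha0) (h.c3 τ hτ0) hκ hκL (h.φ0 a) (h.φ1 a) (h.φ0 τ)
        (h.φ1 τ) h.hC (B := 2 * M) (by positivity) (h.φd a ha0 τ hτ0) (fun x hx => by
          linarith [hM a ha0 x hx, hM τ hτ0 x hx])
      have cz : ContinuousOn (fun x => u τ x - u a x) (Icc 0 L) :=
        ((h.cux _).sub (h.cux _)).continuousOn
      have cρz : ContinuousOn (fun x => (1 + κ * x) * (u τ x - u a x)) (Icc 0 L) :=
        ContinuousOn.mul (by fun_prop) cz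
      have cg1 := h.ckg ha0
      have cg2 := h.ckg hτ0
      have e : ∫ x in (0:ℝ)..L, 2 * (1 + κ * x) * (u τ x - u a x) * (-kg u u1 u3 φ τ x) =
          (∫ x in (0:ℝ)..L, 2 * (1 + κ * x) * (u τ x - u a x) *
            (-((u1 τ x + u3 τ x + φ τ * (u τ x * u1 τ x)) -
            (u1 a x + u3 a x + φ a * (u a x * u1 a x))))) +
          (-2) * ∫ x in (0:ℝ)..L, (1 + κ * x) * (u τ x - u a x) * kg u u1 u3 φ a x := by
        rw [← intervalIntegral.integral_const_mul, ← intervalIntegral.integral_add]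
        · apply intervalIntegral.integral_congr
          intro x _
          simp only [kg]
          ring
        · apply ContinuousOn.intervalIntegrable_of_Icc hL.le
          have : ContinuousOn (fun x => 2 * ((1 + κ * x) * (u τ x - u a x)) *
            (-(kg u u1 u3 φ τ x - kg u u1 u3 φ a x))) (Icc 0 L) :=
            (continuousOn_const.mul cρz).mul (cg2.sub cg1).neg
          simpa only [kg, mul_assoc] using this
        · apply ContinuousOn.intervalIntegrable_of_Icc hL.le
          exact continuousOn_const.mul (cρz.mul cg1)
      rw [e]
      have b1 := (EE_bounds hL hκ.le hκL cz).1
      have b2 : W τ ≤ W ts := Wmax τ ⟨by linarith [hτ.1, hs.1], by linarith [hτ.2, hts.2]⟩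
      have b3 : L2norm L (fun x => u τ x - u a x) ^ 2 ≤ W ts := b1.trans b2
      have b4 : L2norm L (fun x => u τ x - u a x) ≤ g := Real.le_sqrt_of_sq_le b3
      have k1 := (abs_le.1 (cs hL.le cρz cg1)).1
      have k2 := L2_mul_le hL.le (f := fun x => 1 + κ * x) (B := 2) (by fun_prop) cz (by norm_num)
        (fun x hx => by
          have : 0 ≤ κ * x := mul_nonneg hκ.le hx.1
          have h2 : κ * x ≤ κ * L := mul_le_mul_of_nonneg_left hx.2 hκ.le
          rw [abs_of_nonneg (by linarith)]
          linarith)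
      have k3 : L2norm L (fun x => (1 + κ * x) * (u τ x - u a x)) ≤ 2 * g := by linarith
      have k4 := mul_le_mul k3 hR (L2_nonneg _ _) (by positivity)
      have k5 : (2 * κ + (κ + 1 / κ) * (CΦ + 1) ^ 2 * (2 * M) ^ 2) *
          L2norm L (fun x => u τ x - u a x) ^ 2 ≤ C * W ts :=
        mul_le_mul hC b3 (sq_nonneg _) C0
      have k6 : 0 ≤ κ * L2norm L (fun x => u1 τ x - u1 a x) ^ 2 := by positivity
      linarith
    have I := intervalIntegral.integral_mono_on_of_le_Ioo hs.2.le hDi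
      (g := fun τ => C * W ts + 4 * R * g) intervalIntegrable_const hDle
    rw [intervalIntegral.integral_const, ← hDe, smul_eq_mul] at I
    have : W ts - W s = EE L κ (fun x => u ts x - u a x) - EE L κ (fun x => u s x - u a x) := rfl
    linarith
  have lim : W ts ≤ W a + (ts - a) * (C * W ts + 4 * R * g) := by
    have hc : Continuous (fun s => W s + (ts - s) * (C * W ts + 4 * R * g)) := by fun_prop
    have := (hc.tendsto a).mono_left (nhdsWithin_le_nhds (s := Ioi a))
    apply ge_of_tendsto this
    filter_upwards [Ioo_mem_nhdsGT hta] with s hs using main s hs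
  rw [Wa, zero_add, ← g2] at lim
  rw [← g2]
  have q1 : (ts - a) ≤ t - a := by linarith [hts.2]
  have q2 : 0 ≤ C * g ^ 2 + 4 * R * g := by positivity
  have q3 := mul_le_mul_of_nonneg_right q1 q2
  have q4 := mul_le_mul_of_nonneg_right hCt (sq_nonneg g)
  have q5 : g * g ≤ g * (8 * R * (t - a)) := by nlinarith
  have hta' : 0 ≤ t - a := by linarith
  rcases g0.eq_or_lt with hg0 | hg0
  · rw [← hg0, zero_pow (by norm_num)]; positivity
  · have := le_of_mul_le_mul_left q5 hg0
    gcongr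

/-- Propagation of regularity from time `a` to time `t`. -/
lemma Sol.propagate (h : Sol L T CΦ u u1 u2 u3 ut φ) {κ a t R M C δ : ℝ} (hκ : 0 < κ)
    (hκL : κ * L ≤ 1) (ha : 0 ≤ a) (hat : a < t) (hδ : 0 < δ) (htδ : t + δ ≤ T)
    (hM0 : 0 ≤ M) (hM : ∀ t ∈ Icc 0 T, ∀ x ∈ Icc 0 L, |u t x| ≤ M)
    (hC : 2 * κ + (κ + 1 / κ) * (CΦ + 1) ^ 2 * (2 * M) ^ 2 ≤ C)
    (hCt : C * (t - a) ≤ 1 / 2)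
    (hR : L2norm L (kg u u1 u3 φ a) ≤ R)
    (hK : ∀ s ∈ Ioo a (t + δ), ∃ K, ∀ τ ∈ Ioo s (t + δ), L2norm L (kg u u1 u3 φ τ) ≤ K) :
    L2norm L (kg u u1 u3 φ t) ≤ 12 * R := by
  have hL := h.hL
  have R0 : 0 ≤ R := (L2_nonneg _ _).trans hR
  have ht0 : t ∈ Ioo 0 T := ⟨by linarith, by linarith⟩
  have C0 : 0 ≤ C := by
    have : 0 ≤ 2 * κ + (κ + 1 / κ) * (CΦ + 1) ^ 2 * (2 * M) ^ 2 := by positivity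
    linarith
  have cu := h.cu
  obtain ⟨δ', hδ'⟩ : ∃ δ', δ' = min δ (t - a) := ⟨_, rfl⟩
  have hδ'0 : 0 < δ' := by rw [hδ']; exact lt_min hδ (by linarith)
  have hd1 : δ' ≤ δ := by rw [hδ']; exact min_le_left _ _
  have hd2 : δ' ≤ t - a := by rw [hδ']; exact min_le_right _ _
  have key : ∀ r, 0 < r → r < δ' → L2norm L (fun x => u (t + r) x - u t x) ≤ 12 * R * r := by
    intro r hr hrδ
    have w := h.west (t := a + r) hκ hκL ha (by linarith) (by linarith) hM0 hM hC
      (by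
        have : C * (a + r - a) ≤ C * (t - a) := mul_le_mul_of_nonneg_left (by linarith) C0
        linarith) hR
      (fun s hs => by
        obtain ⟨K, hK⟩ := hK s ⟨hs.1, by linarith [hs.2]⟩
        exact ⟨K, fun τ hτ => hK τ ⟨hτ.1, by linarith [hτ.2]⟩⟩)
    have cur : Continuous (fun p : ℝ × ℝ => u (p.1 + r) p.2) :=
      h.cu.comp ((continuous_fst.add continuous_const).prodMk continuous_snd)
    have cE : Continuous (fun τ => EE L κ (fun x => u (τ + r) x - u τ x)) :=
      EE_cont (z := fun τ x => u (τ + r) x - u τ x) (cur.sub cu)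
    have d : ∀ s ∈ Ioo a t, EE L κ (fun x => u (t + r) x - u t x) ≤
        2 * EE L κ (fun x => u (s + r) x - u s x) := by
      intro s hs
      obtain ⟨K, hK⟩ := hK s ⟨hs.1, by linarith [hs.2]⟩
      have := h.double (s := s) (t := t) (r := r) (K := K) (m := 0) hκ hκL (by linarith [hs.1])
        hs.2.le hr.le (by linarith) (fun τ hτ => hK τ ⟨hτ.1, by linarith [hτ.2]⟩)
        (γ := fun _ => C) intervalIntegrable_const
        (fun τ hτ => ⟨2 * M, by positivity, fun x hx => by
          linarith [hM τ ⟨by linarith [hτ.1, hs.1], by linarith [hτ.2]⟩ x hx,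
            hM (τ + r) ⟨by linarith [hτ.1, hs.1], by linarith [hτ.2]⟩ x hx], hC⟩)
        (by
          rw [intervalIntegral.integral_const, smul_eq_mul]
          have : C * (t - s) ≤ C * (t - a) := mul_le_mul_of_nonneg_left (by linarith [hs.1]) C0
          linarith) le_rfl (fun τ _ => sq_nonneg _)
      linarith
    have lim : EE L κ (fun x => u (t + r) x - u t x) ≤
        2 * EE L κ (fun x => u (a + r) x - u a x) := by
      have := ((continuous_const.mul cE).tendsto a (f := fun τ =>
        2 * EE L κ (fun x => u (τ + r) x - u τ x))).mono_left (nhdsWithin_le_nhds (s := Ioi a))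
      apply ge_of_tendsto this
      filter_upwards [Ioo_mem_nhdsGT hat] with s hs using d s hs
    have b := (EE_bounds hL hκ.le hκL (z := fun x => u (t + r) x - u t x)
        ((h.cux _).sub (h.cux _)).continuousOn).1
    apply abs_le_of_sq_le_sq' _ (by positivity) |>.2
    have e : a + r - a = r := by ring
    rw [e] at w
    have : 0 ≤ (R * r) ^ 2 := sq_nonneg _
    nlinarith
  have := fatou (u := u) (g := fun x => -kg u u1 u3 φ t x) (t := t) (K := 12 * R) hL
    (by positivity) (h.ckg (Ioo_subset_Icc_self ht0)).neg h.cux (fun x hx => by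
      have := h.dt t ht0 x hx
      rwa [h.pde t ht0 x hx] at this) hδ'0 key
  rwa [L2_neg] at this

end

/-! ### Part I: the Baire argument -/

section

variable {L : ℝ} {f f1 f2 f3 : ℝ → ℝ}

lemma mvt0 {F F' : ℝ → ℝ} {a b : ℝ} (hab : a < b)
    (hd : ∀ x ∈ Icc a b, HasDerivAt F (F' x) x) : ∃ ξ ∈ Ioo a b, F b - F a = (b - a) * F' ξ := by
  obtain ⟨ξ, hξ, e⟩ := exists_hasDerivAt_eq_slope F F' hab
    (fun x hx => (hd x hx).continuousAt.continuousWithinAt)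
    (fun x hx => hd x (Ioo_subset_Icc_self hx))
  refine ⟨ξ, hξ, ?_⟩
  rw [e]
  have : b - a ≠ 0 := by linarith
  field_simp

/-- third finite differences -/
lemma third_diff (h : C3 L f f1 f2 f3) {x δ : ℝ} (hδ : 0 < δ) (hx : 0 < x)
    (hxL : x + 3 * δ < L) :
    ∃ ξ ∈ Ioo x (x + 3 * δ),
      f (x + δ + δ + δ) - 3 * f (x + δ + δ) + 3 * f (x + δ) - f x = δ ^ 3 * f3 ξ := by
  obtain ⟨ξ1, h1, e1⟩ := mvt0 (F := fun y => f (y + δ + δ) - 2 * f (y + δ) + f y)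
    (F' := fun y => f1 (y + δ + δ) - 2 * f1 (y + δ) + f1 y) (a := x) (b := x + δ) (by linarith)
    (fun y hy => by
      have a1 := h.d0 y ⟨by linarith [hy.1], by linarith [hy.2]⟩
      have a2 := h.d0 (y + δ) ⟨by linarith [hy.1], by linarith [hy.2]⟩
      have a3 := h.d0 (y + δ + δ) ⟨by linarith [hy.1], by linarith [hy.2]⟩
      exact (((a3.comp_add_const (y + δ) δ).comp_add_const y δ).fun_sub
        ((a2.comp_add_const y δ).const_mul 2)).fun_add a1)
  obtain ⟨ξ2, h2, e2⟩ := mvt0 (F := fun y => f1 (y + δ) - f1 y)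
    (F' := fun y => f2 (y + δ) - f2 y) (a := ξ1) (b := ξ1 + δ) (by linarith)
    (fun y hy => by
      have a1 := h.d1 y ⟨by linarith [hy.1, h1.1], by linarith [hy.2, h1.2]⟩
      have a2 := h.d1 (y + δ) ⟨by linarith [hy.1, h1.1], by linarith [hy.2, h1.2]⟩
      exact (a2.comp_add_const y δ).fun_sub a1)
  obtain ⟨ξ3, h3, e3⟩ := mvt0 (F := f2)
    (F' := f3) (a := ξ2) (b := ξ2 + δ) (by linarith)
    (fun y hy => h.d2 y ⟨by linarith [hy.1, h1.1, h2.1], by linarith [hy.2, h1.2, h2.2]⟩)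
  refine ⟨ξ3, ⟨by linarith [h1.1, h2.1, h3.1], by linarith [h1.2, h2.2, h3.2]⟩, ?_⟩
  have e1' : f (x + δ + δ + δ) - 3 * f (x + δ + δ) + 3 * f (x + δ) - f x =
    f (x + δ + δ + δ) - 2 * f (x + δ + δ) + f (x + δ) -
      (f (x + δ + δ) - 2 * f (x + δ) + f x) := by ring
  rw [e1', e1]
  have e2' : f1 (ξ1 + δ + δ) - 2 * f1 (ξ1 + δ) + f1 ξ1 =
    f1 (ξ1 + δ + δ) - f1 (ξ1 + δ) - (f1 (ξ1 + δ) - f1 ξ1) := by ring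
  rw [e2', e2, e3]
  ring

lemma third_bound_iff (hL : 0 < L) (h : C3 L f f1 f2 f3) (n : ℝ) :
    (∀ x ∈ Icc 0 L, |f3 x| ≤ n) ↔ ∀ x δ : ℝ, 0 < δ → 0 < x → x + 3 * δ < L →
      |f (x + δ + δ + δ) - 3 * f (x + δ + δ) + 3 * f (x + δ) - f x| ≤ δ ^ 3 * n := by
  constructor
  · intro hn x δ hδ hx hxL
    obtain ⟨ξ, hξ, e⟩ := third_diff h hδ hx hxL
    rw [e, abs_mul, abs_of_pos (by positivity)]
    exact mul_le_mul_of_nonneg_left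
      (hn ξ ⟨by linarith [hξ.1], by linarith [hξ.2]⟩) (by positivity)
  · intro hd
    have hin : ∀ x ∈ Ioo 0 L, |f3 x| ≤ n := by
      intro x hx
      by_contra hc
      push Not at hc
      have ca : ContinuousAt (fun y => |f3 y|) x :=
        (h.c3.continuousAt (Icc_mem_nhds hx.1 hx.2)).abs
      have ev := ca.eventually (lt_mem_nhds hc)
      rw [Metric.eventually_nhds_iff] at ev
      obtain ⟨r, hr, hr2⟩ := ev
      obtain ⟨δ, hδ⟩ : ∃ δ, δ = min (r / 4) ((L - x) / 4) := ⟨_, rfl⟩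
      have d0 : 0 < δ := by
        rw [hδ]; exact lt_min (by linarith) (by linarith [hx.2])
      have d1 : δ ≤ r / 4 := by rw [hδ]; exact min_le_left _ _
      have d2 : δ ≤ (L - x) / 4 := by rw [hδ]; exact min_le_right _ _
      have hxL : x + 3 * δ < L := by linarith [hx.2]
      obtain ⟨ξ, hξ, e⟩ := third_diff h d0 hx.1 hxL
      have k := hd x δ d0 hx.1 hxL
      rw [e, abs_mul, abs_of_pos (by positivity : 0 < δ ^ 3)] at k
      have k2 := le_of_mul_le_mul_left k (by positivity)
      have k3 := @hr2 ξ (by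
        rw [Real.dist_eq, abs_of_pos (by linarith [hξ.1])]
        linarith [hξ.2])
      linarith
    intro x hx
    have : closure (Ioo 0 L) ⊆ {y | y ∈ Icc 0 L → |f3 y| ≤ n} := by
      intro y hy hyI
      have hc : ContinuousWithinAt (fun y => |f3 y|) (Ioo 0 L) y :=
        (h.c3.abs y hyI).mono Ioo_subset_Icc_self
      haveI : (nhdsWithin y (Ioo 0 L)).NeBot := mem_closure_iff_nhdsWithin_neBot.1 hy
      apply le_of_tendsto hc
      filter_upwards [self_mem_nhdsWithin] with z hz using hin z hz
    rw [closure_Ioo hL.ne] at this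
    exact this hx hx

end

section

variable {L T CΦ : ℝ} {u u1 u2 u3 ut : ℝ → ℝ → ℝ} {φ : ℝ → ℝ}

lemma Sol.closedS (h : Sol L T CΦ u u1 u2 u3 ut φ) (n : ℝ) :
    IsClosed {t | t ∈ Icc 0 T ∧ ∀ x ∈ Icc 0 L, |u3 t x| ≤ n} := by
  have : {t | t ∈ Icc 0 T ∧ ∀ x ∈ Icc 0 L, |u3 t x| ≤ n} = Icc 0 T ∩ ⋂ x : ℝ, ⋂ δ : ℝ,
      {t | 0 < δ → 0 < x → x + 3 * δ < L →
      |u t (x + δ + δ + δ) - 3 * u t (x + δ + δ) + 3 * u t (x + δ) - u t x| ≤ δ ^ 3 * n} := by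
    ext t
    simp only [mem_setOf_eq, mem_inter_iff, mem_iInter]
    apply and_congr_right
    intro ht
    exact third_bound_iff h.hL (h.c3 t ht) n
  rw [this]
  apply isClosed_Icc.inter
  refine isClosed_iInter (fun x => isClosed_iInter (fun δ => ?_))
  by_cases h1 : 0 < δ ∧ 0 < x ∧ x + 3 * δ < L
  · simp only [h1.1, h1.2.1, h1.2.2, true_imp_iff]
    have c := h.cutime
    apply isClosed_le _ continuous_const
    exact ((((c _).sub (continuous_const.mul (c _))).add (continuous_const.mul (c _))).sub
      (c _)).abs
  · convert isClosed_univ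
    ext t
    simp only [mem_setOf_eq, mem_univ, iff_true]
    intro a b c
    exact absurd ⟨a, b, c⟩ h1

lemma Sol.kg_of_S (h : Sol L T CΦ u u1 u2 u3 ut φ) (n : ℝ) (hn : 0 ≤ n) :
    ∃ R, ∀ t ∈ Icc 0 T, (∀ x ∈ Icc 0 L, |u3 t x| ≤ n) → L2norm L (kg u u1 u3 φ t) ≤ R := by
  obtain ⟨M, hM0, hM⟩ := h.bdd
  have hL := h.hL
  have bd : ∀ f : ℝ → ℝ, ContinuousOn f (Icc 0 L) → ∀ B, 0 ≤ B →
      (∀ x ∈ Icc 0 L, |f x| ≤ B) → L2norm L f ≤ B * Real.sqrt L := by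
    intro f hf B hB hb
    have := L2_mono hL.le hf (g := fun _ => B) continuousOn_const (fun x hx => by
      rw [abs_of_nonneg hB]; exact hb x hx)
    rwa [L2_const hL.le, abs_of_nonneg hB] at this
  refine ⟨n * Real.sqrt L + (1 + M) * (n * Real.sqrt L + 2 * (M * Real.sqrt L)), ?_⟩
  intro t ht hS
  have c := h.c3 t ht
  have c1 := bd _ c.c3 n hn hS
  have c2 := bd _ c.c0 M hM0 (hM t ht)
  have k := gn_a3 hL c
  have e0 := L2_nonneg L (u t)
  have a0 := L2_nonneg L (u1 t)
  have c0 := L2_nonneg L (u3 t)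
  have ha : L2norm L (u1 t) ≤ L2norm L (u3 t) + 2 * L2norm L (u t) := by
    by_contra hc
    push Not at hc
    set e := L2norm L (u t)
    set a := L2norm L (u1 t)
    set c := L2norm L (u3 t)
    have : (c + 2 * e) ^ 3 < a ^ 3 := by gcongr
    have p1 : 0 ≤ c ^ 3 := by positivity
    have p2 : 0 ≤ c ^ 2 * e := by positivity
    have p3 : 0 ≤ c * e ^ 2 := by positivity
    have p4 : 0 ≤ e ^ 3 := by positivity
    nlinarith
  have s1 := L2_add hL.le (f := fun x => u1 t x + u3 t x)
    (g := fun x => (φ t * u t x) * u1 t x) (c.c1.add c.c3)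
    ((continuousOn_const.mul c.c0).mul c.c1)
  have s2 := L2_add hL.le c.c1 c.c3
  have s3 := L2_mul_le hL.le (f := fun x => φ t * u t x) (continuousOn_const.mul c.c0) c.c1 hM0
    (fun x hx => by
      rw [abs_mul, abs_of_nonneg (h.φ0 t)]
      have := hM t ht x hx
      have := h.φ1 t
      have := abs_nonneg (u t x)
      nlinarith)
  have s4 : L2norm L (kg u u1 u3 φ t) =
      L2norm L (fun x => u1 t x + u3 t x + (φ t * u t x) * u1 t x) :=
    L2_congr hL.le (fun x _ => by simp only [kg]; ring)
  have s5 : L2norm L (u1 t) ≤ n * Real.sqrt L + 2 * (M * Real.sqrt L) := by linarith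
  have s6 := mul_le_mul_of_nonneg_left s5 hM0
  rw [s4]
  linarith

/-- Qualitative uniform bound. -/
lemma Sol.kgbdd (h : Sol L T CΦ u u1 u2 u3 ut φ) :
    ∃ K, ∀ t ∈ Icc 0 T, L2norm L (kg u u1 u3 φ t) ≤ K := by
  obtain ⟨good, hgood⟩ : ∃ good : ℝ → Prop, good = fun t => ∃ r > 0, ∃ K, ∀ τ ∈ Icc 0 T,
    |τ - t| < r → L2norm L (kg u u1 u3 φ τ) ≤ K := ⟨_, rfl⟩
  have hgd : ∀ t, good t ↔ ∃ r > 0, ∃ K, ∀ τ ∈ Icc 0 T,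
    |τ - t| < r → L2norm L (kg u u1 u3 φ τ) ≤ K := fun t => by rw [hgood]
  clear hgood
  -- compact sets of good points
  have cpt : ∀ A : Set ℝ, IsCompact A → (∀ t ∈ A, good t) →
      ∃ K, ∀ t ∈ A, t ∈ Icc 0 T → L2norm L (kg u u1 u3 φ t) ≤ K := by
    intro A hA hg
    refine hA.induction_on (p := fun A => ∃ K, ∀ t ∈ A, t ∈ Icc 0 T →
      L2norm L (kg u u1 u3 φ t) ≤ K) ⟨0, by simp⟩ ?_ ?_ ?_
    · rintro s t hst ⟨K, hK⟩
      exact ⟨K, fun τ hτ => hK τ (hst hτ)⟩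
    · rintro s t ⟨K, hK⟩ ⟨K', hK'⟩
      refine ⟨max K K', fun τ hτ hτ0 => ?_⟩
      rcases hτ with hτ | hτ
      · exact (hK τ hτ hτ0).trans (le_max_left _ _)
      · exact (hK' τ hτ hτ0).trans (le_max_right _ _)
    · intro t ht
      obtain ⟨r, hr, K, hK⟩ := (hgd t).1 (hg t ht)
      refine ⟨Metric.ball t r, mem_nhdsWithin_of_mem_nhds (Metric.ball_mem_nhds t hr), K,
        fun τ hτ hτ0 => hK τ hτ0 ?_⟩
      rwa [← Real.dist_eq]
  suffices hall : ∀ t ∈ Icc 0 T, good t by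
    obtain ⟨K, hK⟩ := cpt (Icc 0 T) isCompact_Icc hall
    exact ⟨K, fun t ht => hK t ht ht⟩
  by_contra hex
  push Not at hex
  obtain ⟨B, hB⟩ : ∃ B : Set ℝ, B = {t | t ∈ Icc 0 T ∧ ¬ good t} := ⟨_, rfl⟩
  have openg : IsOpen {t | good t} := by
    rw [Metric.isOpen_iff]
    intro t ht
    obtain ⟨r, hr, K, hK⟩ := (hgd t).1 ht
    refine ⟨r / 2, by linarith, fun t' ht' => (hgd t').2 ⟨r / 2, by linarith, K,
      fun τ hτ hτt => hK τ hτ ?_⟩⟩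
    rw [Metric.mem_ball, Real.dist_eq] at ht'
    calc |τ - t| = |(τ - t') + (t' - t)| := by ring_nf
      _ ≤ _ := abs_add_le _ _
      _ < r := by linarith
  have Bcl : IsClosed B := by
    rw [hB]
    exact isClosed_Icc.inter openg.isClosed_compl
  have Bne : B.Nonempty := by
    obtain ⟨t, ht, hg⟩ := hex
    exact ⟨t, by rw [hB]; exact ⟨ht, hg⟩⟩
  have hBT : ∀ t ∈ B, t ∈ Icc 0 T := fun t ht => by rw [hB] at ht; exact ht.1
  have hBg : ∀ t ∈ Icc 0 T, t ∉ B → good t := fun t ht hn => by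
    by_contra hc
    exact hn (by rw [hB]; exact ⟨ht, hc⟩)
  -- Baire
  haveI : Nonempty B := Bne.to_subtype
  haveI : CompleteSpace B := Bcl.completeSpace_coe
  obtain ⟨n, b, hb⟩ := nonempty_interior_of_iUnion_of_closed (X := B)
    (f := fun n : ℕ => {b : B | b.1 ∈ {t | t ∈ Icc 0 T ∧ ∀ x ∈ Icc 0 L, |u3 t x| ≤ n}})
    (fun n => (h.closedS n).preimage continuous_subtype_val)
    (by
      rw [eq_univ_iff_forall]
      intro b
      obtain ⟨M, hM⟩ := isCompact_Icc.exists_bound_of_continuousOn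
        (h.c3 b.1 (hBT b.1 b.2)).c3
      obtain ⟨n, hn⟩ := exists_nat_ge M
      exact mem_iUnion.2 ⟨n, hBT b.1 b.2, fun x hx => (hM x hx).trans hn⟩)
  rw [mem_interior_iff_mem_nhds, Metric.mem_nhds_iff] at hb
  obtain ⟨ρ0, hρ0, hball⟩ := hb
  obtain ⟨ts, htsB⟩ := b
  have hJ : ∀ t ∈ B, |t - ts| < ρ0 → ∀ x ∈ Icc 0 L, |u3 t x| ≤ n := by
    intro t ht htt
    have : (⟨t, ht⟩ : B) ∈ Metric.ball (⟨ts, htsB⟩ : B) ρ0 := by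
      rw [Metric.mem_ball, Subtype.dist_eq, Real.dist_eq]
      exact htt
    exact (hball this).2
  obtain ⟨Rn, hRn⟩ := h.kg_of_S n (by positivity)
  obtain ⟨M, hM0, hM⟩ := h.bdd
  have hL := h.hL
  obtain ⟨κ, hκ⟩ : ∃ κ, κ = 1 / L := ⟨_, rfl⟩
  have κ0 : 0 < κ := by rw [hκ]; positivity
  have κL : κ * L ≤ 1 := by rw [hκ]; field_simp; exact le_rfl
  obtain ⟨C, hC⟩ : ∃ C, C = 2 * κ + (κ + 1 / κ) * (CΦ + 1) ^ 2 * (2 * M) ^ 2 := ⟨_, rfl⟩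
  have C0 : 0 < C := by rw [hC]; positivity
  obtain ⟨ρ, hρ⟩ : ∃ ρ, ρ = min ρ0 (1 / (4 * C)) := ⟨_, rfl⟩
  have ρ0' : 0 < ρ := by rw [hρ]; exact lt_min hρ0 (by positivity)
  have ρle : ρ ≤ ρ0 := by rw [hρ]; exact min_le_left _ _
  have ρC : C * (2 * ρ) ≤ 1 / 2 := by
    have : ρ ≤ 1 / (4 * C) := by rw [hρ]; exact min_le_right _ _
    calc C * (2 * ρ) ≤ C * (2 * (1 / (4 * C))) := by gcongr
      _ = 1 / 2 := by field_simp; norm_num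
  have hts : ts ∈ Icc 0 T := hBT ts htsB
  obtain ⟨p, hp⟩ : ∃ p, p = max 0 (ts - ρ / 2) := ⟨_, rfl⟩
  have p0 : 0 ≤ p := by rw [hp]; exact le_max_left _ _
  have p1 : ts - ρ / 2 ≤ p := by rw [hp]; exact le_max_right _ _
  have p2 : p ≤ ts := by rw [hp]; exact max_le hts.1 (by linarith)
  have hnot : ¬ good ts := by rw [hB] at htsB; exact htsB.2
  apply hnot
  rw [hgd]
  obtain ⟨R, hR⟩ : ∃ R, R = max Rn (L2norm L (kg u u1 u3 φ p)) := ⟨_, rfl⟩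
  have R1 : Rn ≤ R := by rw [hR]; exact le_max_left _ _
  have R2 : L2norm L (kg u u1 u3 φ p) ≤ R := by rw [hR]; exact le_max_right _ _
  have R0 : 0 ≤ R := (L2_nonneg _ _).trans R2
  refine ⟨ρ / 2, by linarith, max (12 * R) (L2norm L (kg u u1 u3 φ T)), ?_⟩
  intro τ hτ hτt
  rcases hτ.2.eq_or_lt with hτT | hτT
  · rw [hτT]; exact le_max_right _ _
  refine le_trans ?_ (le_max_left _ _)
  have hτ1 := (abs_lt.1 hτt).1
  have hτ2 := (abs_lt.1 hτt).2
  by_cases hτB : τ ∈ B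
  · have := hRn τ hτ (hJ τ hτB (by linarith))
    linarith
  by_cases hτp : τ = p
  · rw [hτp]; linarith
  have hpτ : p < τ := by
    rcases max_choice 0 (ts - ρ / 2) with hm | hm
    · rw [← hp] at hm
      rw [hm] at hτp ⊢
      exact lt_of_le_of_ne hτ.1 (Ne.symm hτp)
    · rw [← hp] at hm
      linarith
  -- last bad time
  have Acpt : IsCompact ((B ∪ {p}) ∩ Icc p τ) :=
    isCompact_Icc.inter_left (Bcl.union isClosed_singleton)
  obtain ⟨a, ⟨ha, ha2⟩, hmax⟩ := Acpt.exists_isGreatest ⟨p, Or.inr rfl, le_rfl, hpτ.le⟩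
  have haτ : a < τ := by
    rcases ha2.2.eq_or_lt with hh | hh
    · exfalso
      rcases ha with ha | ha
      · exact hτB (hh ▸ ha)
      · exact hτp (hh ▸ ha)
    · exact hh
  have ha0 : a ∈ Icc 0 T := ⟨p0.trans ha2.1, by linarith⟩
  have haR : L2norm L (kg u u1 u3 φ a) ≤ R := by
    rcases ha with ha | ha
    · refine (hRn a ha0 (hJ a ha ?_)).trans R1
      rw [abs_lt]
      constructor <;> linarith [ha2.1]
    · rw [mem_singleton_iff] at ha
      rw [ha]; exact R2
  have hgd2 : ∀ t ∈ Ioc a τ, good t := by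
    intro t ht
    apply hBg t ⟨by linarith [ht.1, ha0.1], by linarith [ht.2]⟩
    intro htB
    have := hmax ⟨Or.inl htB, by linarith [ht.1, ha2.1], ht.2⟩
    linarith [ht.1]
  obtain ⟨r, hr, K, hK⟩ := (hgd τ).1 (hgd2 τ ⟨haτ, le_rfl⟩)
  obtain ⟨δ, hδ⟩ : ∃ δ, δ = min r (T - τ) := ⟨_, rfl⟩
  have δ0 : 0 < δ := by rw [hδ]; exact lt_min hr (by linarith)
  have δr : δ ≤ r := by rw [hδ]; exact min_le_left _ _
  have δT : δ ≤ T - τ := by rw [hδ]; exact min_le_right _ _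
  refine h.propagate (δ := δ) κ0 κL ha0.1 haτ δ0 (by linarith) hM0 hM hC.symm.le ?_ haR ?_
  · have : C * (τ - a) ≤ C * (2 * ρ) :=
      mul_le_mul_of_nonneg_left (by linarith [ha2.1]) C0.le
    linarith
  · intro s hs
    obtain ⟨K', hK'⟩ := cpt (Icc s τ) isCompact_Icc
      (fun t ht => hgd2 t ⟨by linarith [hs.1, ht.1], ht.2⟩)
    refine ⟨max K K', fun t ht => ?_⟩
    have ht0 : t ∈ Icc 0 T := ⟨by linarith [ht.1, hs.1, ha0.1], by linarith [ht.2]⟩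
    rcases le_total t τ with hle | hle
    · exact (hK' t ⟨ht.1.le, hle⟩ ht0).trans (le_max_right _ _)
    · refine (hK t ht0 ?_).trans (le_max_left _ _)
      rw [abs_of_nonneg (by linarith)]
      linarith [ht.2]

end

/-! ### Decay of the energy and the Kato smoothing estimate -/

section

variable {L T CΦ : ℝ} {u u1 u2 u3 ut : ℝ → ℝ → ℝ} {φ : ℝ → ℝ}

lemma EE_zero {L : ℝ} (hL : 0 < L) (z : ℝ → ℝ) : EE L 0 z = L2norm L z ^ 2 := by
  rw [L2_sq hL.le]
  simp [EE]

lemma Sol.decay (h : Sol L T CΦ u u1 u2 u3 ut φ) {t : ℝ} (ht : t ∈ Icc 0 T) :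
    L2norm L (u t) ≤ L2norm L (u 0) := by
  obtain ⟨K, hK⟩ := h.kgbdd
  obtain ⟨D, hDi, hD, hDe⟩ := h.fixed (κ := 0) (s := 0) (t := t) (K := K) le_rfl (by simp)
    le_rfl ht.1 ht.2 (fun τ hτ => hK τ ⟨hτ.1.le, hτ.2.le.trans ht.2⟩) (w := fun _ => 0)
    continuous_const
  rw [EE_zero h.hL, EE_zero h.hL] at hDe
  simp only [sub_zero] at hDe
  have : ∫ τ in (0:ℝ)..t, D τ ≤ ∫ τ in (0:ℝ)..t, (0:ℝ) := by
    apply intervalIntegral.integral_mono_on_of_le_Ioo ht.1 hDi intervalIntegrable_const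
    intro τ hτ
    rw [hD τ hτ]
    have := energy0 h.hL (h.c3 τ ⟨hτ.1.le, hτ.2.le.trans ht.2⟩) (φ τ)
    simpa [kg] using this
  simp only [intervalIntegral.integral_zero] at this
  have h2 := L2_nonneg L (u t)
  have h3 := L2_nonneg L (u 0)
  have e1 : L2norm L (fun x => u t x) = L2norm L (u t) := rfl
  have e2 : L2norm L (fun x => u 0 x) = L2norm L (u 0) := rfl
  nlinarith

lemma Sol.abdd (h : Sol L T CΦ u u1 u2 u3 ut φ) :
    ∃ M, ∀ t ∈ Icc 0 T, L2norm L (u1 t) ^ 2 ≤ M := by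
  obtain ⟨K, hK⟩ := h.kgbdd
  set e0 := L2norm L (u 0)
  have he0 : 0 ≤ e0 := L2_nonneg _ _
  have hK0 : 0 ≤ K := (L2_nonneg _ _).trans (hK 0 ⟨le_rfl, h.hT.le⟩)
  refine ⟨1 + 6 * (2 * K + 10 * e0 + 48 * e0 ^ 3) * e0 ^ 2, fun t ht => ?_⟩
  have c := lemC h.hL (h.c3 t ht) (h.φ0 t) (h.φ1 t) (Λ := K) (hK t ht)
  have g := gn_a3 h.hL (h.c3 t ht)
  have d := h.decay ht
  have d0 := L2_nonneg L (u t)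
  have a0 := L2_nonneg L (u1 t)
  have c0 := L2_nonneg L (u3 t)
  set e := L2norm L (u t)
  set a := L2norm L (u1 t)
  have c' : L2norm L (u3 t) ≤ 2 * K + 10 * e0 + 48 * e0 ^ 3 := by
    have : e ^ 3 ≤ e0 ^ 3 := by gcongr
    linarith
  have : 6 * L2norm L (u3 t) * e ^ 2 ≤ 6 * (2 * K + 10 * e0 + 48 * e0 ^ 3) * e0 ^ 2 := by
    gcongr
  have : a ^ 2 ≤ 1 + a ^ 3 := by
    rcases le_total a 1 with h1 | h1
    · have : 0 ≤ a ^ 3 := by positivity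
      nlinarith
    · nlinarith [mul_nonneg (sq_nonneg a) (sub_nonneg.2 h1)]
  linarith

lemma Sol.aint (h : Sol L T CΦ u u1 u2 u3 ut φ) :
    IntervalIntegrable (fun τ => L2norm L (u1 τ) ^ 2) volume 0 T := by
  obtain ⟨M, hM⟩ := h.abdd
  obtain ⟨w, hw, hwe⟩ := h.m1
  have hL := h.hL
  set A : ℝ → ℝ := fun t => ∫ x in Ioo 0 L, w (t, x) ^ 2
  have hA : ∀ t ∈ Icc 0 T, L2norm L (u1 t) ^ 2 = A t := by
    intro t ht
    rw [L2_sq hL.le, intervalIntegral.integral_of_le hL.le, integral_Ioc_eq_integral_Ioo]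
    apply setIntegral_congr_fun measurableSet_Ioo
    intro x hx
    simp only [hwe t ht x hx]
  have hAm : StronglyMeasurable A :=
    (hw.pow_const 2).stronglyMeasurable.integral_prod_right (ν := volume.restrict (Ioo 0 L))
  rw [intervalIntegrable_iff_integrableOn_Icc_of_le h.hT.le]
  have : IntegrableOn A (Icc 0 T) := by
    apply Measure.integrableOn_of_bounded (M := M)
    · simp
    · exact hAm.aestronglyMeasurable
    · filter_upwards [ae_restrict_mem measurableSet_Icc] with t ht
      rw [← hA t ht, Real.norm_of_nonneg (sq_nonneg _)]
      exact hM t ht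
  exact this.congr_fun (fun t ht => (hA t ht).symm) measurableSet_Icc

lemma Sol.kato (h : Sol L T CΦ u u1 u2 u3 ut φ) {κ : ℝ} (hκ : 0 < κ) (hκL : κ * L ≤ 1)
    (h1 : L2norm L (u 0) ≤ 1) :
    ∫ τ in (0:ℝ)..T, L2norm L (u1 τ) ^ 2 ≤
      2 / κ * (2 + (2 * κ + 2 * ((κ + 1 / κ) * (CΦ + 1) ^ 2) ^ 2 / κ) * T) *
        L2norm L (u 0) ^ 2 := by
  obtain ⟨K, hK⟩ := h.kgbdd
  have hL := h.hL
  have hT := h.hT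
  set e0 := L2norm L (u 0) with he0d
  have he0 : 0 ≤ e0 := L2_nonneg _ _
  obtain ⟨D, hDi, hD, hDe⟩ := h.fixed (κ := κ) (s := 0) (t := T) (K := K) hκ.le hκL
    le_rfl hT.le le_rfl (fun τ hτ => hK τ ⟨hτ.1.le, hτ.2.le⟩) (w := fun _ => 0)
    continuous_const
  simp only [sub_zero] at hDe
  set C2 := (κ + 1 / κ) * (CΦ + 1) ^ 2
  have hC2 : 0 ≤ C2 := by positivity
  have hb : ∀ τ ∈ Ioo 0 T, D τ ≤ -(κ / 2) * L2norm L (u1 τ) ^ 2 +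
      (2 * κ + 2 * C2 ^ 2 / κ) * e0 ^ 2 := by
    intro τ hτ
    rw [hD τ hτ]
    have hτ' : τ ∈ Icc 0 T := ⟨hτ.1.le, hτ.2.le⟩
    have hc := h.c3 τ hτ'
    have d := h.decay hτ'
    have d0 := L2_nonneg L (u τ)
    have a0 := L2_nonneg L (u1 τ)
    have p := lemP hL (C3.zero L) hc hκ hκL (h.φ0 τ) (h.φ1 τ) (h.φ0 τ) (h.φ1 τ) h.hC
      (B := Real.sqrt (2 * L2norm L (u τ) * L2norm L (u1 τ))) (Real.sqrt_nonneg _)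
      (by
        rw [sub_self, abs_zero, zero_mul]
        exact mul_nonneg h.hC (abs_nonneg _))
      (fun x hx => by
        rw [abs_zero, zero_add]
        apply Real.abs_le_sqrt
        exact sup_sq hL hc hx)
    simp only [sub_zero, mul_zero, add_zero] at p
    rw [Real.sq_sqrt (by positivity)] at p
    have e : ∫ x in (0:ℝ)..L, 2 * (1 + κ * x) * (u τ x - 0) * (-kg u u1 u3 φ τ x) =
      ∫ x in (0:ℝ)..L, 2 * (1 + κ * x) * u τ x * (-(u1 τ x + u3 τ x + φ τ * (u τ x * u1 τ x))) := by
      simp only [sub_zero, kg]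
    rw [e]
    refine p.trans ?_
    have e1 : L2norm L (fun x => u τ x) = L2norm L (u τ) := rfl
    have e2 : L2norm L (fun x => u1 τ x) = L2norm L (u1 τ) := rfl
    rw [e1, e2]
    set e := L2norm L (u τ)
    set a := L2norm L (u1 τ)
    have k1 : e ^ 2 ≤ e0 ^ 2 := by gcongr
    have k2 : e ^ 6 ≤ e0 ^ 2 := by
      calc e ^ 6 = e ^ 2 * e ^ 4 := by ring
        _ ≤ e0 ^ 2 * 1 := by
          gcongr
          exact pow_le_one₀ d0 (d.trans h1)
        _ = _ := by ring
    have k3 : 2 * C2 * a * e ^ 3 ≤ κ / 2 * a ^ 2 + 2 * C2 ^ 2 / κ * e ^ 6 := by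
      have : κ / 2 * a ^ 2 + 2 * C2 ^ 2 / κ * e ^ 6 - 2 * C2 * a * e ^ 3 =
          (κ * a - 2 * C2 * e ^ 3) ^ 2 / (2 * κ) := by
        field_simp
        ring
      have : 0 ≤ (κ * a - 2 * C2 * e ^ 3) ^ 2 / (2 * κ) := by positivity
      linarith
    have k4 : 2 * C2 ^ 2 / κ * e ^ 6 ≤ 2 * C2 ^ 2 / κ * e0 ^ 2 := by gcongr
    have k5 : 2 * κ * e ^ 2 ≤ 2 * κ * e0 ^ 2 := by gcongr
    nlinarith
  have ai := h.aint
  have I := intervalIntegral.integral_mono_on_of_le_Ioo hT.le hDi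
    (g := fun τ => -(κ / 2) * L2norm L (u1 τ) ^ 2 + (2 * κ + 2 * C2 ^ 2 / κ) * e0 ^ 2)
    ((ai.const_mul _).add intervalIntegrable_const) hb
  rw [intervalIntegral.integral_add (ai.const_mul _) intervalIntegrable_const,
    intervalIntegral.integral_const_mul, intervalIntegral.integral_const, ← hDe] at I
  have b1 := EE_nonneg hL hκ.le (fun x => u T x)
  have b2 := (EE_bounds hL hκ.le hκL (h.cux 0).continuousOn).2
  have e1 : EE L κ (fun x => u 0 x) = EE L κ (u 0) := rfl
  rw [← he0d] at b2
  simp only [smul_eq_mul, sub_zero] at I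
  have : κ / 2 * (∫ τ in (0:ℝ)..T, L2norm L (u1 τ) ^ 2) ≤
    (2 + (2 * κ + 2 * C2 ^ 2 / κ) * T) * e0 ^ 2 := by linarith
  calc ∫ τ in (0:ℝ)..T, L2norm L (u1 τ) ^ 2 =
      2 / κ * (κ / 2 * (∫ τ in (0:ℝ)..T, L2norm L (u1 τ) ^ 2)) := by field_simp
    _ ≤ 2 / κ * ((2 + (2 * κ + 2 * C2 ^ 2 / κ) * T) * e0 ^ 2) := by gcongr
    _ = _ := by ring

end

/-! ### Nash type argument -/

lemma nash_ibp {L : ℝ} {f f1 f2 f3 z z1 z2 z3 : ℝ → ℝ} (hL : 0 < L) (h : C3 L f f1 f2 f3)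
    (hz : C3 L z z1 z2 z3) (φ : ℝ) :
    ∫ x in (0:ℝ)..L, z x * (-(f1 x + f3 x + φ * (f x * f1 x))) =
      ∫ x in (0:ℝ)..L, z1 x * (f2 x + f x + φ * (f x ^ 2 / 2)) := by
  have cA : ContinuousOn (fun x => z x * (-(f1 x + f3 x + φ * (f x * f1 x)))) (Icc 0 L) :=
    hz.c0.mul (((h.c1.add h.c3).add (continuousOn_const.mul (h.c0.mul h.c1))).neg)
  have cB : ContinuousOn (fun x => f2 x + f x + φ * (f x ^ 2 / 2)) (Icc 0 L) :=
    (h.c2.add h.c0).add (continuousOn_const.mul ((h.c0.pow 2).div_const 2))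
  have cC : ContinuousOn (fun x => z1 x * (f2 x + f x + φ * (f x ^ 2 / 2))) (Icc 0 L) :=
    hz.c1.mul cB
  have := ftc0 (F := fun x => z x * (f2 x + f x + φ * (f x ^ 2 / 2)))
    (F' := fun x => z1 x * (f2 x + f x + φ * (f x ^ 2 / 2)) -
      z x * (-(f1 x + f3 x + φ * (f x * f1 x)))) hL.le (hz.c0.mul cB)
    (fun x hx => by
      exact ((hz.d0 x hx).fun_mul (((h.d2 x hx).fun_add (h.d0 x hx)).fun_add
        ((((h.d0 x hx).fun_pow 2).div_const 2).const_mul φ))).congr_deriv (by norm_num; ring))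
    (cC.sub cA)
  rw [intervalIntegral.integral_sub (cC.intervalIntegrable_of_Icc hL.le)
    (cA.intervalIntegrable_of_Icc hL.le)] at this
  simp only [hz.b0, hz.bL, zero_mul, sub_zero] at this
  linarith

section

variable {L T CΦ : ℝ} {u u1 u2 u3 ut : ℝ → ℝ → ℝ} {φ : ℝ → ℝ}

lemma Sol.nash (h : Sol L T CΦ u u1 u2 u3 ut φ) {τ r Kc : ℝ} (hτ : 0 ≤ τ) (hr : 0 ≤ r)
    (hT : τ + r ≤ T)
    (hK : ∀ σ ∈ Ioo τ (τ + r), L2norm L (fun x => u2 σ x + u σ x + φ σ * (u σ x ^ 2 / 2)) ≤ Kc) :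
    L2norm L (fun x => u (τ + r) x - u τ x) ^ 2 ≤
      r * (L2norm L (fun x => u1 (τ + r) x - u1 τ x) * Kc) := by
  have hL := h.hL
  obtain ⟨K, hKK⟩ := h.kgbdd
  obtain ⟨M, hM0, hM⟩ := h.bdd
  have cu := h.cu
  have m1 : τ ∈ Icc 0 T := ⟨hτ, by linarith⟩
  have m2 : τ + r ∈ Icc 0 T := ⟨by linarith, hT⟩
  have hz := (h.c3 _ m2).sub (h.c3 _ m1)
  set z : ℝ → ℝ := fun x => u (τ + r) x - u τ x with hzd
  have cz : Continuous z := (h.cux _).sub (h.cux _)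
  obtain ⟨D, hDi, hD, hDe⟩ := h.ident (s := τ) (t := τ + r) (r := 0) (K := K) (M := 2 * M) hτ
    (by linarith) le_rfl (by linarith)
    (G := fun σ x => z x * u σ x)
    (P := fun σ x => z x)
    (Q := fun σ x => 0)
    (by fun_prop) (by fun_prop) (by fun_prop) (by positivity)
    (fun σ _ x hx => by
      have k1 := hM _ m1 x hx
      have k2 := hM _ m2 x hx
      have q2 := (abs_sub (u (τ + r) x) (u τ x)).trans (add_le_add k2 k1)
      simp only [hzd]
      linarith)
    (fun σ hσ x hx => by
      rw [abs_zero]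
      positivity)
    (fun σ hσ x hx => by
      have d1 := h.dt σ ⟨by linarith [hσ.1], by linarith [hσ.2]⟩ x hx
      exact (d1.const_mul (z x)).congr_deriv (by ring))
    (fun σ hσ => hKK σ ⟨by linarith [hσ.1], by linarith [hσ.2]⟩)
  have hle : ∫ σ in τ..(τ + r), D σ ≤
      ∫ σ in τ..(τ + r), L2norm L (fun x => u1 (τ + r) x - u1 τ x) * Kc := by
    apply intervalIntegral.integral_mono_on_of_le_Ioo (by linarith) hDi intervalIntegrable_const
    intro σ hσ
    have mσ : σ ∈ Icc 0 T := ⟨by linarith [hσ.1], by linarith [hσ.2]⟩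
    have hc := h.c3 σ mσ
    rw [hD σ hσ]
    have e := nash_ibp hL hc hz (φ σ)
    simp only [zero_mul, add_zero, kg]
    rw [e]
    refine (le_abs_self _).trans ((cs hL.le hz.c1 ((hc.c2.add hc.c0).add
      (continuousOn_const.mul ((hc.c0.pow 2).div_const 2)))).trans ?_)
    exact mul_le_mul_of_nonneg_left (hK σ hσ) (L2_nonneg _ _)
  rw [← hDe, ← intervalIntegral.integral_sub] at hle
  · rw [L2_sq hL.le]
    have e : ∫ x in (0:ℝ)..L, z x ^ 2 = ∫ x in (0:ℝ)..L, (z x * u (τ + r) x - z x * u τ x) := by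
      apply intervalIntegral.integral_congr
      intro x _
      simp only [hzd]
      ring
    rw [e]
    refine hle.trans (le_of_eq ?_)
    rw [intervalIntegral.integral_const, smul_eq_mul]
    ring
  · exact (cz.mul (h.cux _)).intervalIntegrable _ _
  · exact (cz.mul (h.cux _)).intervalIntegrable _ _

/-- uniform doubling -/
lemma Sol.dbl (h : Sol L T CΦ u u1 u2 u3 ut φ) {κ : ℝ} (hκ : 0 < κ) (hκL : κ * L ≤ 1)
    (hκT : κ * T ≤ 1 / 8)
    (hsm : 16 * L * ((κ + 1 / κ) * (CΦ + 1) ^ 2) * ∫ τ in (0:ℝ)..T, L2norm L (u1 τ) ^ 2 ≤ 1 / 4)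
    {s t r m : ℝ} (hs : 0 ≤ s) (hst : s ≤ t) (hr : 0 ≤ r) (ht : t + r ≤ T) (hm0 : 0 ≤ m)
    (hm : ∀ τ ∈ Ioo s t, m ≤ L2norm L (fun x => u1 (τ + r) x - u1 τ x) ^ 2) :
    L2norm L (fun x => u (t + r) x - u t x) ^ 2 + κ * m * (t - s) ≤
      4 * L2norm L (fun x => u (s + r) x - u s x) ^ 2 := by
  have hL := h.hL
  obtain ⟨K, hK⟩ := h.kgbdd
  set C2 := (κ + 1 / κ) * (CΦ + 1) ^ 2 with hC2d
  have hC2 : 0 ≤ C2 := by positivity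
  set a : ℝ → ℝ := fun τ => L2norm L (u1 τ) ^ 2 with ha
  have ai : IntervalIntegrable a volume 0 T := h.aint
  have a0 : ∀ τ, 0 ≤ a τ := fun τ => sq_nonneg _
  have sub : ∀ p q, 0 ≤ p → p ≤ q → q ≤ T → IntervalIntegrable a volume p q ∧
      ∫ τ in p..q, a τ ≤ ∫ τ in (0:ℝ)..T, a τ := fun p q hp hpq hq => by
    refine ⟨ai.mono_set ?_, ?_⟩
    · rw [uIcc_of_le hpq, uIcc_of_le h.hT.le]
      exact Icc_subset_Icc hp hq
    · exact intervalIntegral.integral_mono_interval hp hpq hq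
        (Filter.Eventually.of_forall (fun τ => a0 τ)) ai
  obtain ⟨i1, I1⟩ := sub s t hs hst (by linarith)
  obtain ⟨i2, I2⟩ := sub (s + r) (t + r) (by linarith) (by linarith) ht
  have i2' : IntervalIntegrable (fun τ => a (τ + r)) volume s t := by
    have := i2.comp_add_right r
    simpa using this
  have I2' : ∫ τ in s..t, a (τ + r) = ∫ τ in (s + r)..(t + r), a τ :=
    intervalIntegral.integral_comp_add_right _ _
  have key := h.double hκ hκL hs hst hr ht (K := K)
    (fun τ hτ => hK τ ⟨by linarith [hτ.1], by linarith [hτ.2]⟩)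
    (γ := fun τ => 2 * κ + 8 * L * C2 * (a τ + a (τ + r)))
    (intervalIntegrable_const.add ((i1.add i2').const_mul _))
    (fun τ hτ => by
      have m1 : τ ∈ Icc 0 T := ⟨by linarith [hτ.1], by linarith [hτ.2]⟩
      have m2 : τ + r ∈ Icc 0 T := ⟨by linarith [hτ.1], by linarith [hτ.2]⟩
      refine ⟨Real.sqrt (4 * L * a τ) + Real.sqrt (4 * L * a (τ + r)), by positivity,
        fun x hx => add_le_add (Real.abs_le_sqrt (sup_sq' hL (h.c3 _ m1) hx))
          (Real.abs_le_sqrt (sup_sq' hL (h.c3 _ m2) hx)), ?_⟩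
      have q1 := Real.sq_sqrt (mul_nonneg (by positivity : 0 ≤ 4 * L) (a0 τ))
      have q2 := Real.sq_sqrt (mul_nonneg (by positivity : 0 ≤ 4 * L) (a0 (τ + r)))
      have q3 : (Real.sqrt (4 * L * a τ) + Real.sqrt (4 * L * a (τ + r))) ^ 2 ≤
          8 * L * (a τ + a (τ + r)) := by
        nlinarith [sq_nonneg (Real.sqrt (4 * L * a τ) - Real.sqrt (4 * L * a (τ + r)))]
      have q4 := mul_le_mul_of_nonneg_left q3 hC2
      rw [← hC2d]
      linarith)
    (by
      rw [intervalIntegral.integral_add intervalIntegrable_const ((i1.add i2').const_mul _),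
        intervalIntegral.integral_const, intervalIntegral.integral_const_mul,
        intervalIntegral.integral_add i1 i2', I2', smul_eq_mul]
      have q1 : (t - s) * (2 * κ) ≤ 1 / 4 := by
        have : (t - s) * (2 * κ) ≤ T * (2 * κ) := by
          apply mul_le_mul_of_nonneg_right _ (by positivity)
          linarith
        linarith
      have q2 := mul_le_mul_of_nonneg_left (add_le_add I1 I2) (by positivity : 0 ≤ 8 * L * C2)
      linarith)
    hm0 hm
  have b1 := (EE_bounds hL hκ.le hκL (z := fun x => u (t + r) x - u t x)
    ((h.cux _).sub (h.cux _)).continuousOn).1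
  have b2 := (EE_bounds hL hκ.le hκL (z := fun x => u (s + r) x - u s x)
    ((h.cux _).sub (h.cux _)).continuousOn).2
  linarith

end

/-! ### Bootstrap -/

lemma exists_cbrt {X : ℝ} (hX : 0 ≤ X) : ∃ k : ℝ, 0 ≤ k ∧ k ^ 3 = X := by
  refine ⟨X ^ ((1:ℝ) / 3), Real.rpow_nonneg hX _, ?_⟩
  rw [← Real.rpow_natCast, ← Real.rpow_mul hX]
  norm_num

lemma L2_continuous {L : ℝ} {f : ℝ → ℝ → ℝ} (hf : Continuous (fun p : ℝ × ℝ => f p.1 p.2)) :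
    Continuous (fun t => L2norm L (f t)) := by
  unfold L2norm
  apply Real.continuous_sqrt.comp
  apply intervalIntegral.continuous_parametric_intervalIntegral_of_continuous'
  have : Continuous (fun p : ℝ × ℝ => f p.1 p.2 ^ 2) := by fun_prop
  exact this

section

variable {L T CΦ : ℝ} {u u1 u2 u3 ut : ℝ → ℝ → ℝ} {φ : ℝ → ℝ}

lemma Sol.lip (h : Sol L T CΦ u u1 u2 u3 ut φ) {K : ℝ}
    (hKK : ∀ t ∈ Icc 0 T, L2norm L (kg u u1 u3 φ t) ≤ K) {τ r : ℝ} (hτ : 0 ≤ τ) (hr : 0 ≤ r)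
    (hT : τ + r ≤ T) : L2norm L (fun x => u (τ + r) x - u τ x) ≤ K * r := by
  have hL := h.hL
  obtain ⟨M, hM0, hM⟩ := h.bdd
  have cu := h.cu
  have m1 : τ ∈ Icc 0 T := ⟨hτ, by linarith⟩
  have m2 : τ + r ∈ Icc 0 T := ⟨by linarith, hT⟩
  set z : ℝ → ℝ := fun x => u (τ + r) x - u τ x with hzd
  have cz : Continuous z := (h.cux _).sub (h.cux _)
  obtain ⟨D, hDi, hD, hDe⟩ := h.ident (s := τ) (t := τ + r) (r := 0) (K := K) (M := 2 * M) hτ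
    (by linarith) le_rfl (by linarith)
    (G := fun σ x => z x * u σ x)
    (P := fun σ x => z x)
    (Q := fun σ x => 0)
    (by fun_prop) (by fun_prop) (by fun_prop) (by positivity)
    (fun σ _ x hx => by
      have k1 := hM _ m1 x hx
      have k2 := hM _ m2 x hx
      have q2 := (abs_sub (u (τ + r) x) (u τ x)).trans (add_le_add k2 k1)
      simp only [hzd]
      linarith)
    (fun σ hσ x hx => by
      rw [abs_zero]
      positivity)
    (fun σ hσ x hx => by
      have d1 := h.dt σ ⟨by linarith [hσ.1], by linarith [hσ.2]⟩ x hx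
      exact (d1.const_mul (z x)).congr_deriv (by ring))
    (fun σ hσ => hKK σ ⟨by linarith [hσ.1], by linarith [hσ.2]⟩)
  have hle : ∫ σ in τ..(τ + r), D σ ≤
      ∫ σ in τ..(τ + r), L2norm L z * K := by
    apply intervalIntegral.integral_mono_on_of_le_Ioo (by linarith) hDi intervalIntegrable_const
    intro σ hσ
    have mσ : σ ∈ Icc 0 T := ⟨by linarith [hσ.1], by linarith [hσ.2]⟩
    rw [hD σ hσ]
    simp only [zero_mul, add_zero]
    refine (le_abs_self _).trans ((cs hL.le cz.continuousOn (h.ckg mσ).neg).trans ?_)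
    apply mul_le_mul_of_nonneg_left _ (L2_nonneg _ _)
    exact (L2_neg (L := L) (kg u u1 u3 φ σ)).le.trans (hKK σ mσ)
  rw [← hDe, ← intervalIntegral.integral_sub] at hle
  · have e : L2norm L z ^ 2 = ∫ x in (0:ℝ)..L, (z x * u (τ + r) x - z x * u τ x) := by
      rw [L2_sq hL.le]
      apply intervalIntegral.integral_congr
      intro x _
      simp only [hzd]
      ring
    rw [← e, intervalIntegral.integral_const, smul_eq_mul] at hle
    have z0 := L2_nonneg L z
    rcases z0.eq_or_lt with z1 | z1
    · rw [← z1]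
      have : 0 ≤ K := (L2_nonneg _ _).trans (hKK τ m1)
      positivity
    · nlinarith
  · exact (cz.mul (h.cux _)).intervalIntegrable _ _
  · exact (cz.mul (h.cux _)).intervalIntegrable _ _

/-- time Lipschitz estimate with the right rate -/
def PP (L T : ℝ) (u : ℝ → ℝ → ℝ) (A : ℝ) : Prop :=
  ∀ t ∈ Ioo 0 T, ∀ r, 0 ≤ r → t + r ≤ T →
    L2norm L (fun x => u (t + r) x - u t x) ≤ A / (t * √t) * r

lemma Sol.PP_kg (h : Sol L T CΦ u u1 u2 u3 ut φ) {A : ℝ} (hA : 0 ≤ A) (hP : PP L T u A) {s t : ℝ}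
    (hs : 0 < s) (hst : s ≤ t) (ht : t < T) :
    L2norm L (kg u u1 u3 φ t) ≤ A / (s * √s) := by
  have ht0 : 0 < t := hs.trans_le hst
  rw [← L2_neg]
  apply fatou h.hL (by positivity) (t := t) (u := u) (δ := T - t) (h.ckg ⟨ht0.le, ht.le⟩).neg h.cux
    (fun x hx => (h.dt t ⟨ht0, ht⟩ x hx).congr_deriv (h.pde t ⟨ht0, ht⟩ x hx)) (by linarith)
  intro r hr hr'
  refine (hP t ⟨ht0, ht⟩ r hr.le (by linarith)).trans ?_
  have : √s ≤ √t := Real.sqrt_le_sqrt hst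
  gcongr

lemma Sol.PP_u3 (h : Sol L T CΦ u u1 u2 u3 ut φ) {A N : ℝ} (hN0 : L2norm L (u 0) ≤ N)
    (hN1 : N ≤ 1) (hAN : T * √T * N ≤ A) (hP : PP L T u A) {s t : ℝ}
    (hs : 0 < s) (hst : s ≤ t) (ht : t < T) :
    N ≤ A / (s * √s) ∧ L2norm L (u3 t) ≤ 60 * (A / (s * √s)) := by
  have hT := h.hT
  have hN : 0 ≤ N := (L2_nonneg _ _).trans hN0
  have hA : 0 ≤ A := le_trans (by positivity) hAN
  have mt : t ∈ Icc 0 T := ⟨(hs.trans_le hst).le, ht.le⟩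
  have k := h.PP_kg hA hP hs hst ht
  have c := lemC h.hL (h.c3 t mt) (h.φ0 t) (h.φ1 t) (Λ := A / (s * √s)) k
  have d := (h.decay mt).trans hN0
  have d0 := L2_nonneg L (u t)
  have hNΛ : N ≤ A / (s * √s) := by
    rw [le_div_iff₀ (by positivity)]
    refine le_trans ?_ hAN
    have : √s ≤ √T := Real.sqrt_le_sqrt (by linarith)
    have : s * √s ≤ T * √T := by
      gcongr
      linarith
    nlinarith
  refine ⟨hNΛ, ?_⟩
  have : L2norm L (u t) ^ 3 ≤ L2norm L (u t) := by
    have h1 := d.trans hN1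
    have h2 : L2norm L (u t) ^ 2 ≤ 1 := pow_le_one₀ d0 h1
    nlinarith
  linarith

lemma Sol.boot (h : Sol L T CΦ u u1 u2 u3 ut φ) {κ : ℝ} (hκ : 0 < κ) (hκL : κ * L ≤ 1)
    (hκT : κ * T ≤ 1 / 8)
    (hsm : 16 * L * ((κ + 1 / κ) * (CΦ + 1) ^ 2) * ∫ τ in (0:ℝ)..T, L2norm L (u1 τ) ^ 2 ≤ 1 / 4)
    {A N C : ℝ} (hN0 : L2norm L (u 0) ≤ N) (hN1 : N ≤ 1) (hC : T * √T ≤ C)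
    (hC2 : 2 ^ 12 * (128 ^ 3 * 1200000 ^ 2) * 8 ^ 5 / κ ^ 3 ≤ C ^ 2)
    (hAN : C * N ≤ A) (hP : PP L T u A) : PP L T u (A / 2) := by
  intro t ht r hr htr
  have hL := h.hL
  have hT := h.hT
  have hN : 0 ≤ N := (L2_nonneg _ _).trans hN0
  have hC0 : 0 ≤ C := le_trans (by positivity) hC
  have hA : 0 ≤ A := le_trans (by positivity) hAN
  have hAN' : T * √T * N ≤ A := le_trans (by gcongr) hAN
  have t0 := ht.1
  set Λ := A / (t / 2 * √(t / 2)) with hΛ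
  have hΛ0 : 0 ≤ Λ := by positivity
  have hz0 : L2norm L (fun x => u (t / 2 + r) x - u (t / 2) x) ≤ Λ * r :=
    hP (t / 2) ⟨by linarith, by linarith [ht.2]⟩ r hr (by linarith)
  set q0 := L2norm L (fun x => u (t / 2 + r) x - u (t / 2) x) with hq0
  have q00 : 0 ≤ q0 := L2_nonneg _ _
  set q := L2norm L (fun x => u (t + r) x - u t x) with hq
  have qn : 0 ≤ q := L2_nonneg _ _
  set m := 8 * q0 ^ 2 / (κ * t) with hm
  have hm0 : 0 ≤ m := by positivity
  by_cases hcase : ∀ σ ∈ Ioo (t / 2) t, m ≤ L2norm L (fun x => u1 (σ + r) x - u1 σ x) ^ 2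
  · have := h.dbl hκ hκL hκT hsm (s := t / 2) (t := t) (r := r) (m := m) (by linarith)
      (by linarith) hr htr hm0 hcase
    rw [← hq0, ← hq] at this
    have e : κ * m * (t - t / 2) = 4 * q0 ^ 2 := by
      rw [hm]
      field_simp
      ring
    have : q = 0 := by
      have : q ^ 2 ≤ 0 := by linarith
      exact pow_eq_zero_iff (two_ne_zero) |>.1 (le_antisymm this (sq_nonneg _))
    rw [this]
    positivity
  · push Not at hcase
    obtain ⟨σ, hσ, hb⟩ := hcase
    set b := L2norm L (fun x => u1 (σ + r) x - u1 σ x) with hbd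
    have b0 : 0 ≤ b := L2_nonneg _ _
    obtain ⟨k, hk0, hk⟩ := exists_cbrt (X := 1200000 * Λ ^ 2 * N) (by positivity)
    have nash := h.nash (τ := σ) (r := r) (Kc := k) (by linarith [hσ.1]) hr (by linarith [hσ.2])
      (fun ρ hρ => by
        have mρ : ρ ∈ Icc 0 T := ⟨by linarith [hσ.1, hρ.1], by linarith [hσ.2, hρ.2]⟩
        obtain ⟨k1, k2⟩ := h.PP_u3 hN0 hN1 hAN' hP (s := t / 2) (t := ρ) (by linarith)
          (by linarith [hσ.1, hρ.1]) (by linarith [hσ.2, hρ.2])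
        have := lemK hL (h.c3 ρ mρ) (h.φ0 ρ) (h.φ1 ρ) ((h.decay mρ).trans hN0) hN1 k1 k2
        rw [← hΛ, ← hk] at this
        exact le_of_pow_le_pow_left₀ (by norm_num) hk0 this)
    rw [← hbd] at nash
    have d := h.dbl hκ hκL hκT hsm (s := σ) (t := t) (r := r) (m := 0) (by linarith [hσ.1])
      hσ.2.le hr htr le_rfl (fun _ _ => sq_nonneg _)
    rw [← hq] at d
    have s1 : q ^ 2 ≤ 4 * (r * (b * k)) := by linarith
    have s2 : b ^ 2 ≤ 8 * (Λ * r) ^ 2 / (κ * t) := hb.le.trans (by rw [hm]; gcongr)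
    have s3 : q ^ 12 ≤ (16 * r ^ 2 * (8 * (Λ * r) ^ 2 / (κ * t)) * k ^ 2) ^ 3 := by
      calc q ^ 12 = (q ^ 2) ^ 6 := by ring
        _ ≤ (4 * (r * (b * k))) ^ 6 := by gcongr
        _ = (16 * r ^ 2 * b ^ 2 * k ^ 2) ^ 3 := by ring
        _ ≤ _ := by gcongr
    have s4 : (16 * r ^ 2 * (8 * (Λ * r) ^ 2 / (κ * t)) * k ^ 2) ^ 3 =
        (128 ^ 3 * 1200000 ^ 2) * (Λ ^ 2) ^ 5 * N ^ 2 * r ^ 12 / (κ ^ 3 * t ^ 3) := by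
      calc _ = 128 ^ 3 * r ^ 12 * Λ ^ 6 / (κ ^ 3 * t ^ 3) * (k ^ 3) ^ 2 := by
            field_simp
            ring
        _ = _ := by
            rw [hk]
            ring
    have s5 : Λ ^ 2 = 8 * A ^ 2 / t ^ 3 := by
      rw [hΛ, div_pow, mul_pow, Real.sq_sqrt (by positivity)]
      field_simp
      ring
    rw [s4, s5] at s3
    have s6 : (A / 2 / (t * √t) * r) ^ 12 = A ^ 10 * r ^ 12 / t ^ 18 * (A ^ 2 / 2 ^ 12) := by
      have : (A / 2 / (t * √t) * r) ^ 12 = A ^ 12 * r ^ 12 / (2 ^ 12 * t ^ 12 * (√t ^ 2) ^ 6) := by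
        field_simp
      rw [this, Real.sq_sqrt t0.le]
      field_simp
    have s7 : (128 ^ 3 * 1200000 ^ 2) * 8 ^ 5 / κ ^ 3 * N ^ 2 ≤ A ^ 2 / 2 ^ 12 := by
      have : (C * N) ^ 2 ≤ A ^ 2 := by gcongr
      have e : (128 ^ 3 * 1200000 ^ 2) * 8 ^ 5 / κ ^ 3 * N ^ 2 =
        (2 ^ 12 * (128 ^ 3 * 1200000 ^ 2) * 8 ^ 5 / κ ^ 3) * N ^ 2 / 2 ^ 12 := by
        field_simp
      rw [e]
      have := mul_le_mul_of_nonneg_right hC2 (sq_nonneg N)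
      rw [mul_pow] at *
      gcongr
      linarith
    have s8 : q ^ 12 ≤ (A / 2 / (t * √t) * r) ^ 12 := by
      rw [s6]
      refine s3.trans ?_
      calc _ = A ^ 10 * r ^ 12 / t ^ 18 * ((128 ^ 3 * 1200000 ^ 2) * 8 ^ 5 / κ ^ 3 * N ^ 2) := by
            field_simp
        _ ≤ _ := by gcongr
    exact le_of_pow_le_pow_left₀ (by norm_num) (by positivity) s8

lemma PP.mono {A B : ℝ} (h : PP L T u A) (hAB : A ≤ B) : PP L T u B := by
  intro t ht r hr htr
  refine (h t ht r hr htr).trans ?_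
  have := ht.1
  gcongr

lemma Sol.PPfinal (h : Sol L T CΦ u u1 u2 u3 ut φ) {κ : ℝ} (hκ : 0 < κ) (hκL : κ * L ≤ 1)
    (hκT : κ * T ≤ 1 / 8)
    (hsm : 16 * L * ((κ + 1 / κ) * (CΦ + 1) ^ 2) * ∫ τ in (0:ℝ)..T, L2norm L (u1 τ) ^ 2 ≤ 1 / 4)
    {N C : ℝ} (hN0 : L2norm L (u 0) ≤ N) (hN1 : N ≤ 1) (hC : T * √T ≤ C)
    (hC2 : 2 ^ 12 * (128 ^ 3 * 1200000 ^ 2) * 8 ^ 5 / κ ^ 3 ≤ C ^ 2) : PP L T u (C * N) := by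
  obtain ⟨K, hK⟩ := h.kgbdd
  have hT := h.hT
  have hK0 : 0 ≤ K := (L2_nonneg _ _).trans (hK 0 ⟨le_rfl, h.hT.le⟩)
  have start : PP L T u (K * (T * √T)) := by
    intro t ht r hr htr
    refine (h.lip hK ht.1.le hr htr).trans ?_
    apply mul_le_mul_of_nonneg_right _ hr
    have t0 := ht.1
    rw [le_div_iff₀ (by positivity)]
    have : √t ≤ √T := Real.sqrt_le_sqrt ht.2.le
    have := ht.2.le
    gcongr
  set A := K * (T * √T)
  have step : ∀ n : ℕ, PP L T u (max (A / 2 ^ n) (C * N)) := by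
    intro n
    induction n with
    | zero => exact start.mono (by simp)
    | succ n ih =>
      rcases le_total (A / 2 ^ n) (C * N) with hle | hle
      · rw [max_eq_right hle] at ih
        exact ih.mono (le_max_right _ _)
      · rw [max_eq_left hle] at ih
        exact (h.boot hκ hκL hκT hsm hN0 hN1 hC hC2 hle ih).mono
          (le_trans (le_of_eq (by rw [pow_succ]; field_simp)) (le_max_left _ _))
  intro t ht r hr htr
  have lim : Filter.Tendsto (fun n : ℕ => max (A / 2 ^ n) (C * N) / (t * √t) * r) Filter.atTop
      (nhds (max 0 (C * N) / (t * √t) * r)) := by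
    apply Filter.Tendsto.mul_const
    apply Filter.Tendsto.div_const
    apply Filter.Tendsto.max _ tendsto_const_nhds
    have := (tendsto_pow_atTop_nhds_zero_of_lt_one (r := (1/2:ℝ)) (by norm_num)
      (by norm_num)).const_mul A
    simpa [div_eq_mul_inv] using this
  have hN : 0 ≤ N := (L2_nonneg _ _).trans hN0
  have hC0 : 0 ≤ C := le_trans (by positivity) hC
  rw [max_eq_right (by positivity)] at lim
  exact ge_of_tendsto' lim (fun n => step n t ht r hr htr)

end

/-! ### The smoothing estimate for abstract solutions -/

lemma ibp1 {L : ℝ} {f f1 f2 f3 z z1 z2 z3 : ℝ → ℝ} (hL : 0 < L) (h : C3 L f f1 f2 f3)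
    (hz : C3 L z z1 z2 z3) :
    ∫ x in (0:ℝ)..L, z1 x * f1 x = - ∫ x in (0:ℝ)..L, z x * f2 x := by
  have cA : ContinuousOn (fun x => z1 x * f1 x) (Icc 0 L) := hz.c1.mul h.c1
  have cB : ContinuousOn (fun x => z x * f2 x) (Icc 0 L) := hz.c0.mul h.c2
  have := ftc0 (F := fun x => z x * f1 x) (F' := fun x => z1 x * f1 x + z x * f2 x) hL.le
    (hz.c0.mul h.c1) (fun x hx => (hz.d0 x hx).fun_mul (h.d1 x hx)) (cA.add cB)
  rw [intervalIntegral.integral_add (cA.intervalIntegrable_of_Icc hL.le)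
    (cB.intervalIntegrable_of_Icc hL.le)] at this
  simp only [hz.b0, hz.bL, zero_mul, sub_zero] at this
  linarith

section

variable {L T CΦ : ℝ} {u u1 u2 u3 ut : ℝ → ℝ → ℝ} {φ : ℝ → ℝ}

lemma Sol.aest (h : Sol L T CΦ u u1 u2 u3 ut φ) {N C : ℝ} (hN0 : L2norm L (u 0) ≤ N)
    (hN1 : N ≤ 1) (hC : T * √T ≤ C) (hP : PP L T u (C * N)) {t : ℝ} (ht : t ∈ Ioo 0 T) :
    L2norm L (u1 t) ≤ (360 * C + 1) * N / √t := by
  have hT := h.hT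
  have t0 := ht.1
  have hN : 0 ≤ N := (L2_nonneg _ _).trans hN0
  have hC0 : 0 ≤ C := le_trans (by positivity) hC
  obtain ⟨k1, k2⟩ := h.PP_u3 hN0 hN1 (by gcongr) hP t0 le_rfl ht.2
  have mt : t ∈ Icc 0 T := ⟨ht.1.le, ht.2.le⟩
  have g := gn_a3 h.hL (h.c3 t mt)
  have d := (h.decay mt).trans hN0
  have d0 := L2_nonneg L (u t)
  have c0 := L2_nonneg L (u3 t)
  apply le_of_pow_le_pow_left₀ (n := 3) (by norm_num) (by positivity)
  refine g.trans ?_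
  calc 6 * L2norm L (u3 t) * L2norm L (u t) ^ 2 ≤ 6 * (60 * (C * N / (t * √t))) * N ^ 2 := by gcongr
    _ = 360 * C * (N ^ 3 / (t * √t)) := by ring
    _ ≤ (360 * C + 1) ^ 3 * (N ^ 3 / (t * √t)) := by
      apply mul_le_mul_of_nonneg_right _ (by positivity)
      have : (360 * C + 1) ≤ (360 * C + 1) ^ 3 := le_self_pow₀ (by linarith) (by norm_num)
      linarith
    _ = ((360 * C + 1) * N / √t) ^ 3 := by
      have : √t ^ 3 = t * √t := by
        calc √t ^ 3 = √t ^ 2 * √t := by ring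
          _ = _ := by rw [Real.sq_sqrt t0.le]
      rw [div_pow, this]
      ring

lemma Sol.aestT (h : Sol L T CΦ u u1 u2 u3 ut φ) {B : ℝ} (hB : 0 ≤ B)
    (hb : ∀ t ∈ Ioo 0 T, L2norm L (u1 t) ≤ B / √t) :
    L2norm L (u1 T) ≤ B / √T := by
  obtain ⟨K, hK⟩ := h.kgbdd
  have hL := h.hL
  have hT := h.hT
  have mT : T ∈ Icc 0 T := ⟨hT.le, le_rfl⟩
  set a := L2norm L (u1 T) with ha
  set b := L2norm L (u2 T)
  have a0 : 0 ≤ a := L2_nonneg _ _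
  have b0 : 0 ≤ b := L2_nonneg _ _
  have key : ∀ τ ∈ Ioo 0 T, a ^ 2 ≤ B / √τ * a + K * (T - τ) * b := by
    intro τ hτ
    have mτ : τ ∈ Icc 0 T := ⟨hτ.1.le, hτ.2.le⟩
    have hc := h.c3 T mT
    have hcτ := h.c3 τ mτ
    have e1 := ibp1 hL hc hc
    have e2 := ibp1 hL hc hcτ
    have e3 : a ^ 2 = ∫ x in (0:ℝ)..L, u1 T x * u1 T x := by
      rw [ha, L2_sq hL.le]
      simp only [sq]
    have c1 := cs hL.le hcτ.c1 hc.c1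
    have c2 := cs hL.le (hc.c0.sub hcτ.c0) hc.c2
    have e4 : ∫ x in (0:ℝ)..L, (u T x - u τ x) * u2 T x =
        (∫ x in (0:ℝ)..L, u T x * u2 T x) - ∫ x in (0:ℝ)..L, u τ x * u2 T x := by
      rw [← intervalIntegral.integral_sub]
      · simp only [sub_mul]
      · exact (hc.c0.mul hc.c2).intervalIntegrable_of_Icc hL.le
      · exact (hcτ.c0.mul hc.c2).intervalIntegrable_of_Icc hL.le
    have l := h.lip hK (τ := τ) (r := T - τ) hτ.1.le (by linarith [hτ.2]) (by linarith)
    rw [add_sub_cancel] at l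
    simp only [Pi.sub_apply] at c2
    rw [e4] at c2
    have c3 := neg_abs_le ((∫ x in (0:ℝ)..L, u T x * u2 T x) - ∫ x in (0:ℝ)..L, u τ x * u2 T x)
    have c4 := le_abs_self (∫ x in (0:ℝ)..L, u1 τ x * u1 T x)
    have c5 := mul_le_mul_of_nonneg_right (hb τ hτ) a0
    have c6 := mul_le_mul_of_nonneg_right l b0
    have c7 : L2norm L (u T - u τ) * b ≤ K * (T - τ) * b := c6
    linarith
  have lim : Filter.Tendsto (fun τ => B / √τ * a + K * (T - τ) * b) (nhdsWithin T (Iio T))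
      (nhds (B / √T * a + K * (T - T) * b)) := by
    have : ContinuousAt (fun τ => B / √τ * a + K * (T - τ) * b) T := by
      have : √T ≠ 0 := by positivity
      exact ((continuousAt_const.div Real.continuous_sqrt.continuousAt this).mul
        continuousAt_const).add (by fun_prop)
    exact this.tendsto.mono_left nhdsWithin_le_nhds
  have l2 := ge_of_tendsto lim (by
    filter_upwards [Ioo_mem_nhdsLT hT] with τ hτ
    exact key τ hτ)
  rw [sub_self, mul_zero, zero_mul, add_zero] at l2
  rcases a0.eq_or_lt with h1 | h1
  · rw [← h1]
    positivity
  · nlinarith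

end

/-- the smoothing estimate for abstract solutions, with uniform constants -/
lemma sol_smoothing (L T CΦ : ℝ) (hL : 0 < L) (hT : 0 < T) (hCΦ : 0 ≤ CΦ) :
    ∃ η > 0, ∃ C > 0, ∀ (u u1 u2 u3 ut : ℝ → ℝ → ℝ) (φ : ℝ → ℝ),
      Sol L T CΦ u u1 u2 u3 ut φ → L2norm L (u 0) ≤ η → ∀ t ∈ Ioc 0 T,
        L2norm L (u t) ^ 2 + L2norm L (u1 t) ^ 2 ≤ (C / √t * L2norm L (u 0)) ^ 2 := by
  set κ := min (1 / L) (1 / (8 * T)) with hκd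
  have hκ : 0 < κ := lt_min (by positivity) (by positivity)
  have hκL : κ * L ≤ 1 := by
    have : κ ≤ 1 / L := min_le_left _ _
    rwa [le_div_iff₀ hL] at this
  have hκT : κ * T ≤ 1 / 8 := by
    have : κ ≤ 1 / (8 * T) := min_le_right _ _
    rw [le_div_iff₀ (by positivity)] at this
    linarith
  set C2 := (κ + 1 / κ) * (CΦ + 1) ^ 2 with hC2
  have hC2p : 0 < C2 := by positivity
  set C4 := 2 / κ * (2 + (2 * κ + 2 * C2 ^ 2 / κ) * T) with hC4
  have hC4p : 0 < C4 := by positivity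
  set X := 2 ^ 12 * (128 ^ 3 * 1200000 ^ 2) * 8 ^ 5 / κ ^ 3 with hX
  have hXp : 0 < X := by positivity
  set C := T * √T + X + 1
  have hCT : T * √T ≤ C := by simp only [C]; linarith
  have hCp : 1 ≤ C := by
    have : 0 ≤ T * √T := by positivity
    simp only [C]; linarith
  have hCX : X ≤ C ^ 2 := by
    have : 0 ≤ T * √T := by positivity
    have : X ≤ C := by simp only [C]; linarith
    nlinarith
  clear_value C
  rw [hX] at hCX
  clear_value X C4 C2 κ
  refine ⟨min 1 (1 / (64 * L * C2 * C4 + 1)), lt_min one_pos (by positivity),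
    √T + (360 * C + 1), by positivity, ?_⟩
  intro u u1 u2 u3 ut φ h hη t ht
  set N := L2norm L (u 0) with hN
  have hN0 : 0 ≤ N := L2_nonneg _ _
  have hN1 : N ≤ 1 := hη.trans (min_le_left _ _)
  have hN2 : N ≤ 1 / (64 * L * C2 * C4 + 1) := hη.trans (min_le_right _ _)
  have kato := h.kato hκ hκL hN1
  have hsm : 16 * L * C2 * ∫ τ in (0:ℝ)..T, L2norm L (u1 τ) ^ 2 ≤ 1 / 4 := by
    have k1 := mul_le_mul_of_nonneg_left kato (by positivity : 0 ≤ 16 * L * C2)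
    refine k1.trans ?_
    rw [← hC2, ← hC4, ← hN]
    rw [le_div_iff₀ (by positivity)] at hN2
    have : 0 ≤ 64 * L * C2 * C4 := by positivity
    have k2 : N ^ 2 ≤ N := by nlinarith
    have k3 := mul_le_mul_of_nonneg_left k2 this
    nlinarith
  rw [hC2] at hsm
  have hP := h.PPfinal hκ hκL hκT hsm le_rfl hN1 hCT hCX
  have ha : ∀ t ∈ Ioo 0 T, L2norm L (u1 t) ≤ (360 * C + 1) * N / √t := fun t ht =>
    h.aest le_rfl hN1 hCT hP ht
  have hat : L2norm L (u1 t) ≤ (360 * C + 1) * N / √t := by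
    rcases ht.2.eq_or_lt with h1 | h1
    · subst h1
      exact h.aestT (B := (360 * C + 1) * N) (by positivity) ha
    · exact ha t ⟨ht.1, h1⟩
  have t0 := ht.1
  have he : L2norm L (u t) ≤ √T * N / √t := by
    refine (h.decay ⟨ht.1.le, ht.2⟩).trans ?_
    rw [le_div_iff₀ (by positivity)]
    have := mul_le_mul_of_nonneg_left (Real.sqrt_le_sqrt ht.2) hN0
    linarith
  have e0 := L2_nonneg L (u t)
  have a0 := L2_nonneg L (u1 t)
  have sqle : L2norm L (u t) ^ 2 + L2norm L (u1 t) ^ 2 ≤ (L2norm L (u t) + L2norm L (u1 t)) ^ 2 := by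
    linarith [mul_nonneg e0 a0, add_sq (L2norm L (u t)) (L2norm L (u1 t))]
  calc _ ≤ (L2norm L (u t) + L2norm L (u1 t)) ^ 2 := sqle
    _ ≤ (√T * N / √t + (360 * C + 1) * N / √t) ^ 2 := by gcongr
    _ = _ := by ring

/-! ### From classical solutions to abstract solutions -/

lemma cutoff_lip {Φ : ℝ → ℝ} (hΦ : IsCutoff Φ) :
    ∃ CΦ, 0 ≤ CΦ ∧ ∀ ε > 0, ∀ e e' : ℝ, 0 ≤ e → 0 ≤ e' →
      |Φ (e' / ε) - Φ (e / ε)| * min e e' ≤ CΦ * |e' - e| := by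
  obtain ⟨h1, h2, _, h4, _⟩ := hΦ
  have hd : Differentiable ℝ Φ := h1.differentiable (by simp)
  have hc : Continuous (deriv Φ) := h1.continuous_deriv (by norm_cast)
  obtain ⟨K, hK⟩ := isCompact_Icc.exists_bound_of_continuousOn (s := Icc (0:ℝ) 1) hc.continuousOn
  have hK0 : 0 ≤ K := (norm_nonneg _).trans (hK 0 ⟨le_rfl, zero_le_one⟩)
  have hlip : ∀ r s : ℝ, 0 ≤ r → 0 ≤ s → |Φ s - Φ r| ≤ K * |s - r| := by
    intro r s hr hs
    have e : ∀ r, 0 ≤ r → Φ r = Φ (min r 1) := fun r hr => by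
      rcases le_total r 1 with hr1 | hr1
      · rw [min_eq_left hr1]
      · rw [min_eq_right hr1, h4 r hr1, h4 1 (mem_Ici.2 le_rfl)]
    rw [e r hr, e s hs]
    have m : ∀ r : ℝ, 0 ≤ r → min r 1 ∈ Icc (0:ℝ) 1 := fun r hr =>
      ⟨le_min hr zero_le_one, min_le_right _ _⟩
    have := Convex.norm_image_sub_le_of_norm_deriv_le (f := Φ) (s := Icc (0:ℝ) 1)
      (fun x _ => hd x) hK (convex_Icc 0 1) (m r hr) (m s hs)
    rw [Real.norm_eq_abs, Real.norm_eq_abs] at this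
    refine this.trans (mul_le_mul_of_nonneg_left ?_ hK0)
    refine (abs_min_sub_min_le_max s 1 r 1).trans ?_
    simp
  refine ⟨K, hK0, fun ε hε e e' he he' => ?_⟩
  have hm0 : 0 ≤ min e e' := le_min he he'
  rcases le_total (min e e') ε with hm | hm
  · have k := hlip (e / ε) (e' / ε) (by positivity) (by positivity)
    rw [← sub_div, abs_div, abs_of_pos hε] at k
    calc _ ≤ K * (|e' - e| / ε) * ε := by gcongr
      _ = _ := by field_simp
  · have k1 : ε ≤ e := hm.trans (min_le_left _ _)
    have k2 : ε ≤ e' := hm.trans (min_le_right _ _)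
    rw [h4 (e / ε) (by rw [mem_Ici, le_div_iff₀ hε]; linarith),
      h4 (e' / ε) (by rw [mem_Ici, le_div_iff₀ hε]; linarith), sub_self, abs_zero, zero_mul]
    positivity

/-- clamping to `[0,a]` -/
noncomputable def cl (a t : ℝ) : ℝ := max 0 (min a t)

lemma cl_mem {a : ℝ} (ha : 0 ≤ a) (t : ℝ) : cl a t ∈ Icc 0 a :=
  ⟨le_max_left _ _, max_le ha (min_le_left _ _)⟩

lemma cl_eq {a t : ℝ} (ht : t ∈ Icc 0 a) : cl a t = t := by
  rw [cl, min_eq_right ht.2, max_eq_right ht.1]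

lemma cl_cont (a : ℝ) : Continuous (cl a) := by
  unfold cl
  fun_prop

lemma cl_nhds {a t : ℝ} (ht : t ∈ Ioo 0 a) : ∀ᶠ s in nhds t, cl a s = s := by
  filter_upwards [Ioo_mem_nhds ht.1 ht.2] with s hs
  exact cl_eq ⟨hs.1.le, hs.2.le⟩

lemma toSol {L T ε CΦ : ℝ} {Φ : ℝ → ℝ} {y : ℝ → ℝ → ℝ} (hL : 0 < L) (hT : 0 < T) (hε : 0 < ε)
    (hΦ : IsCutoff Φ) (hC : 0 ≤ CΦ)
    (hCΦ : ∀ ε > 0, ∀ e e' : ℝ, 0 ≤ e → 0 ≤ e' →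
      |Φ (e' / ε) - Φ (e / ε)| * min e e' ≤ CΦ * |e' - e|)
    (hy : IsModifiedKdVSol L T ε Φ y) :
    Sol L T CΦ (fun t x => y (cl T t) (cl L x)) (fun t => iteratedDerivWithin 1 (y t) (Icc 0 L))
      (fun t => iteratedDerivWithin 2 (y t) (Icc 0 L))
      (fun t => iteratedDerivWithin 3 (y t) (Icc 0 L))
      (fun t x => deriv (fun s => y (cl T s) (cl L x)) t)
      (fun t => Φ (L2norm L (fun x => y (cl T t) (cl L x)) / ε)) := by
  obtain ⟨y1, y2, y3, y4, y5⟩ := hy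
  have cu : Continuous (fun p : ℝ × ℝ => y (cl T p.1) (cl L p.2)) := by
    have : Continuous (fun p : ℝ × ℝ => ((cl T p.1, cl L p.2) : ℝ × ℝ)) :=
      ((cl_cont T).comp continuous_fst).prodMk ((cl_cont L).comp continuous_snd)
    exact y3.comp_continuous this (fun p => ⟨cl_mem hT.le _, cl_mem hL.le _⟩)
  have ud : UniqueDiffOn ℝ (Icc 0 L) := uniqueDiffOn_Icc hL
  have dk : ∀ t ∈ Icc 0 T, ∀ k : ℕ, k < 3 → ∀ x ∈ Ioo 0 L,
      HasDerivAt (iteratedDerivWithin k (y t) (Icc 0 L))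
        (iteratedDerivWithin (k + 1) (y t) (Icc 0 L) x) x := by
    intro t ht k hk x hx
    have := (y1 t ht).differentiableOn_iteratedDerivWithin (m := k) (by exact_mod_cast hk) ud
    rw [iteratedDerivWithin_succ]
    exact (this x ⟨hx.1.le, hx.2.le⟩).hasDerivWithinAt.hasDerivAt (Icc_mem_nhds hx.1 hx.2)
  have ck : ∀ t ∈ Icc 0 T, ∀ k : ℕ, k ≤ 3 →
      ContinuousOn (iteratedDerivWithin k (y t) (Icc 0 L)) (Icc 0 L) := fun t ht k hk =>
    (y1 t ht).continuousOn_iteratedDerivWithin (m := k) (by exact_mod_cast hk) ud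
  have dx : ∀ t ∈ Icc 0 T, ∀ x ∈ Ioo 0 L, HasDerivAt (fun x => y (cl T t) (cl L x))
      (iteratedDerivWithin 1 (y t) (Icc 0 L) x) x := by
    intro t ht x hx
    have := dk t ht 0 (by norm_num) x hx
    rw [iteratedDerivWithin_zero] at this
    rw [cl_eq ht]
    apply this.congr_of_eventuallyEq
    filter_upwards [cl_nhds hx] with s hs
    rw [hs]
  have dt' : ∀ t ∈ Ioo 0 T, ∀ x ∈ Ioo 0 L, HasDerivAt (fun s => y (cl T s) (cl L x))
      (derivWithin (fun s => y s x) (Icc 0 T) t) t := by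
    intro t ht x hx
    have hx' : x ∈ Icc 0 L := ⟨hx.1.le, hx.2.le⟩
    have := ((y2 x hx').differentiableOn (by norm_num) t ⟨ht.1.le, ht.2.le⟩).hasDerivWithinAt
    rw [cl_eq hx']
    apply (this.hasDerivAt (Icc_mem_nhds ht.1 ht.2)).congr_of_eventuallyEq
    filter_upwards [cl_nhds ht] with s hs
    rw [hs]
  have nn : ∀ t, 0 ≤ L2norm L (fun x => y (cl T t) (cl L x)) / ε := fun t =>
    div_nonneg (L2_nonneg _ _) hε.le
  refine ⟨hL, hT, hC, cu, ?_, ?_, ?_, ?_, ?_, ?_, ?_, ?_⟩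
  · intro t ht
    have z0 : (0:ℝ) ∈ Icc 0 L := ⟨le_rfl, hL.le⟩
    have zL : L ∈ Icc 0 L := ⟨hL.le, le_rfl⟩
    refine ⟨(cu.comp (Continuous.prodMk_right t)).continuousOn, ck t ht 1 (by norm_num),
      ck t ht 2 (by norm_num), ck t ht 3 le_rfl, dx t ht, dk t ht 1 (by norm_num),
      dk t ht 2 (by norm_num), ?_, ?_, ?_⟩
    · rw [cl_eq ht, cl_eq z0]
      exact (y5 t ht).1
    · rw [cl_eq ht, cl_eq zL]
      exact (y5 t ht).2.1
    · rw [iteratedDerivWithin_one]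
      exact (y5 t ht).2.2
  · intro t ht x hx
    exact (dt' t ht x hx).differentiableAt.hasDerivAt
  · have := measurable_deriv_with_param (f := fun x t => y (cl T t) (cl L x))
      (cu.comp continuous_swap)
    exact this.comp measurable_swap
  · refine ⟨fun p => deriv (fun x => y (cl T p.1) (cl L x)) p.2,
      measurable_deriv_with_param (f := fun t x => y (cl T t) (cl L x)) cu, ?_⟩
    intro t ht x hx
    exact (dx t ht x hx).deriv.symm
  · intro t ht x hx
    have ht' : t ∈ Icc 0 T := ⟨ht.1.le, ht.2.le⟩
    have hx' : x ∈ Icc 0 L := ⟨hx.1.le, hx.2.le⟩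
    have e : L2norm L (fun x => y (cl T t) (cl L x)) = L2norm L (y t) :=
      L2_congr hL.le (fun x hx => by rw [cl_eq ht', cl_eq ⟨hx.1.le, hx.2.le⟩])
    have p := y4 t ht x hx
    simp only [kg]
    rw [(dt' t ht x hx).deriv, e, cl_eq ht', cl_eq hx', iteratedDerivWithin_one]
    linarith
  · intro t
    exact (hΦ.2.1 _ (nn t)).1
  · intro t
    exact (hΦ.2.1 _ (nn t)).2
  · intro t _ t' _
    exact hCΦ ε hε _ _ (L2_nonneg _ _) (L2_nonneg _ _)


/-- there exist `η > 0` and `C > 0` such that for every `ε ∈ (0,1]`,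
every initial datum `y₀` with `‖y₀‖_{L²(0,L)} ≤ η` and every classical solution `y`
of the modified KdV system on `[0,T]` with `y(0,·) = y₀`, one has
`‖y(t,·)‖_{H₀¹(0,L)} ≤ (C/√t) ‖y₀‖_{L²(0,L)}` for all `t ∈ (0,T]`. -/
theorem modifiedKdV_smoothing_rate (L T : ℝ) (hL : 0 < L) (hT : 0 < T)
    (Φ : ℝ → ℝ) (hΦ : IsCutoff Φ) :
    ∃ η > 0, ∃ C > 0, ∀ ε ∈ Ioc (0:ℝ) 1, ∀ y₀ : ℝ → ℝ, L2norm L y₀ ≤ η →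
      ∀ y : ℝ → ℝ → ℝ, IsModifiedKdVSol L T ε Φ y →
      (∀ x ∈ Icc (0:ℝ) L, y 0 x = y₀ x) →
      ∀ t ∈ Ioc (0:ℝ) T, H1norm L (y t) ≤ C / Real.sqrt t * L2norm L y₀ := by
  obtain ⟨CΦ, hC, hCΦ⟩ := cutoff_lip hΦ
  obtain ⟨η, hη, C, hC0, main⟩ := sol_smoothing L T CΦ hL hT hC
  refine ⟨η, hη, C, hC0, ?_⟩
  intro ε hε y₀ hy₀ y hy h0 t ht
  have hs := toSol hL hT hε.1 hΦ hC hCΦ hy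
  have z0 : (0:ℝ) ∈ Icc 0 T := ⟨le_rfl, hT.le⟩
  have ht' : t ∈ Icc 0 T := ⟨ht.1.le, ht.2⟩
  have e0 : L2norm L (fun x => y (cl T 0) (cl L x)) = L2norm L y₀ :=
    L2_congr hL.le (fun x hx => by
      have hx' : x ∈ Icc 0 L := ⟨hx.1.le, hx.2.le⟩
      rw [cl_eq z0, cl_eq hx', h0 x hx'])
  have et : L2norm L (fun x => y (cl T t) (cl L x)) = L2norm L (y t) :=
    L2_congr hL.le (fun x hx => by rw [cl_eq ht', cl_eq ⟨hx.1.le, hx.2.le⟩])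
  have key := main _ _ _ _ _ _ hs (by rw [e0]; exact hy₀) t ht
  rw [e0, et, iteratedDerivWithin_one, L2_sq hL.le, L2_sq hL.le] at key
  have cy : ContinuousOn (y t) (Icc 0 L) := (hy.1 t ht').continuousOn
  have cy1 : ContinuousOn (derivWithin (y t) (Icc 0 L)) (Icc 0 L) := by
    have := (hs.c3 t ht').c1
    rwa [iteratedDerivWithin_one] at this
  have i1 : IntervalIntegrable (fun x => y t x ^ 2) volume 0 L :=
    (cy.pow 2).intervalIntegrable_of_Icc hL.le
  have i2 : IntervalIntegrable (fun x => derivWithin (y t) (Icc 0 L) x ^ 2) volume 0 L :=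
    (cy1.pow 2).intervalIntegrable_of_Icc hL.le
  rw [← intervalIntegral.integral_add i1 i2] at key
  exact Real.sqrt_le_iff.2 ⟨mul_nonneg (by positivity) (L2_nonneg _ _), key⟩
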